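/- arXiv:2007.02059 — 2 statements merged into one kernel-verified Lean document; each statement's English description precedes it below -/
import Mathlib

section
/- For every positive integer k and every integer s with 0 ≤ s ≤ k, there exists a Gallai coloring of the complete graph on f(k,s) vertices with colors from {1,...,k} that contains no monochromatic copy of K4^+ in any color i ∈ {1,...,s} and no monochromatic copy of K3 in any color i ∈ {s+1,...,k}. -/
/-- A symmetric edge-coloring function on the complete graph on `Fin n`. -/
def IsSym {n : ℕ} {α : Type*} (c : Fin n → Fin n → α) : Prop :=
  ∀ u v : Fin n, c u v = c v u

/-- A Gallai coloring: no triangle whose three edges get three distinct colors. -/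
def NoRainbowTriangle {n : ℕ} {α : Type*} (c : Fin n → Fin n → α) : Prop :=
  ∀ u v w : Fin n, u ≠ v → u ≠ w → v ≠ w →
    c u v = c u w ∨ c u v = c v w ∨ c u w = c v w

/-- There is a monochromatic triangle in color `i`. -/
def HasMonoK3 {n : ℕ} {α : Type*} (c : Fin n → Fin n → α) (i : α) : Prop :=
  ∃ a b d : Fin n, a ≠ b ∧ a ≠ d ∧ b ≠ d ∧
    c a b = i ∧ c a d = i ∧ c b d = i

/-- There is a monochromatic copy of `K₄⁺ = K₁ ∨ (K₃ + K₁)` in color `i`: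
a vertex `x` joined to all of `a, b, d, e`, where `a b d` is a triangle
(equivalently `K₄` on `{x,a,b,d}` together with a pendant edge `x e`). -/
def HasMonoK4plus {n : ℕ} {α : Type*} (c : Fin n → Fin n → α) (i : α) : Prop :=
  ∃ x a b d e : Fin n,
    x ≠ a ∧ x ≠ b ∧ x ≠ d ∧ x ≠ e ∧ a ≠ b ∧ a ≠ d ∧ a ≠ e ∧ b ≠ d ∧ b ≠ e ∧ d ≠ e ∧
    c x a = i ∧ c x b = i ∧ c x d = i ∧ c x e = i ∧
    c a b = i ∧ c a d = i ∧ c b d = i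

/-- The function `f(k,s)` from the paper (for `1 ≤ k` and `s ≤ k`). -/
def f (k s : ℕ) : ℕ :=
  if Even s ∧ Even (k - s) then 17 ^ (s / 2) * 5 ^ ((k - s) / 2)
  else if Even s then 2 * 17 ^ (s / 2) * 5 ^ ((k - s - 1) / 2)
  else if s = k then 4 * 17 ^ ((k - 1) / 2)
  else if Odd (k - s) then 8 * 17 ^ ((s - 1) / 2) * 5 ^ ((k - s - 1) / 2)
  else 16 * 17 ^ ((s - 1) / 2) * 5 ^ ((k - s - 2) / 2)

/-
A copy of a connected graph in an old colour of a lexicographic product of colourings stays inside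
one fibre, while a copy of any graph in a new colour projects to a homomorphic image in the base.
So substituting a good colouring into the vertices of a base colouring with fresh colours preserves
goodness as soon as each base colour class contains no clique that its forbidden graph contains.
Both colours of the Paley colouring are `K₃`-free on 5 vertices and `K₄`-free on 17 vertices, which
gives the factors 5 and 17 for two colours; the remaining factors come from one colour on `K₂`,
and from starting with a monochromatic `K₄`, too small to contain `K₄⁺`.
-/

open SimpleGraph

section Labelings

variable {V W X α : Type*}

/-- A Gallai colouring, as an edge labelling of a complete graph: every triangle has two edges of
the same label. -/
def IsGallai (C : TopEdgeLabeling V α) : Prop :=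
  ∀ ⦃x y z : V⦄ (hxy : x ≠ y) (hxz : x ≠ z) (hyz : y ≠ z),
    C.get x y hxy = C.get x z hxz ∨ C.get x y hxy = C.get y z hyz ∨ C.get x z hxz = C.get y z hyz

theorem IsGallai.pullback {C : TopEdgeLabeling V α} (hC : IsGallai C) (e : W ↪ V) :
    IsGallai (C.pullback e) :=
  fun _ _ _ hxy hxz hyz ↦ hC (e.injective.ne hxy) (e.injective.ne hxz) (e.injective.ne hyz)

theorem labelGraph_pullback_isContained (C : TopEdgeLabeling V α) (e : W ↪ V) (i : α) :
    (C.pullback e).labelGraph i ⊑ C.labelGraph i := by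
  refine ⟨⟨e, fun {x y} hxy ↦ ?_⟩, e.injective⟩
  obtain ⟨hne, hi⟩ := (TopEdgeLabeling.labelGraph_adj x y).1 hxy
  exact (TopEdgeLabeling.labelGraph_adj _ _).2 ⟨e.injective.ne hne, hi⟩

/-- The lexicographic product of two edge labellings of complete graphs: a copy of `C` is
substituted for each vertex of the base labelling `B`. -/
def lexLabeling [DecidableEq V] (B : TopEdgeLabeling V α) (C : TopEdgeLabeling W α) :
    TopEdgeLabeling (V × W) α :=
  EdgeLabeling.mk
    (fun x y hxy ↦ if h : x.1 = y.1 then C.get x.2 y.2 fun h' ↦ hxy (Prod.ext h h')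
      else B.get x.1 y.1 h)
    (fun x y _ ↦ by simp only [eq_comm (a := y.1), B.get_comm x.1, C.get_comm x.2])

section lexLabeling

variable [DecidableEq V] {B : TopEdgeLabeling V α} {C : TopEdgeLabeling W α}

theorem lexLabeling_get {x y : V × W} (hxy : x ≠ y) :
    (lexLabeling B C).get x y hxy = if h : x.1 = y.1 then
      C.get x.2 y.2 fun h' ↦ hxy (Prod.ext h h') else B.get x.1 y.1 h :=
  rfl

theorem IsGallai.lexLabeling (hB : IsGallai B) (hC : IsGallai C) :
    IsGallai (lexLabeling B C) := by
  rintro ⟨u, x⟩ ⟨v, y⟩ ⟨w, z⟩ hxy hxz hyz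
  simp only [lexLabeling_get]
  rcases eq_or_ne u v with rfl | huv
  · rcases eq_or_ne u w with rfl | huw
    · simpa only [dite_true] using hC (ne_of_apply_ne (Prod.mk u) hxy)
        (ne_of_apply_ne (Prod.mk u) hxz) (ne_of_apply_ne (Prod.mk u) hyz)
    · simp [huw]
  · rcases eq_or_ne u w with rfl | huw
    · simp [huv, huv.symm, B.get_comm u v]
    · rcases eq_or_ne v w with rfl | hvw
      · simp [huv]
      · simpa only [huv, huw, hvw, dite_false] using hB huv huw hvw

theorem labelGraph_lexLabeling_adj {i : α} {x y : V × W} :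
    ((lexLabeling B C).labelGraph i).Adj x y ↔
      (B.labelGraph i).Adj x.1 y.1 ∨ x.1 = y.1 ∧ (C.labelGraph i).Adj x.2 y.2 := by
  obtain ⟨u, x⟩ := x
  obtain ⟨v, y⟩ := y
  rcases eq_or_ne u v with rfl | huv
  · simp [lexLabeling_get]
  · simp [lexLabeling_get, huv]

theorem nonempty_hom_labelGraph_lexLabeling {i : α} (hC : C.labelGraph i = ⊥) :
    Nonempty ((lexLabeling B C).labelGraph i →g B.labelGraph i) :=
  ⟨Prod.fst, fun hxy ↦ by
    simpa only [labelGraph_lexLabeling_adj, hC, bot_adj, and_false, or_false] using hxy⟩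

theorem free_labelGraph_lexLabeling {H : SimpleGraph X} {i : α} (hH : H.Preconnected)
    (hB : B.labelGraph i = ⊥) (hC : H.Free (C.labelGraph i)) :
    H.Free ((lexLabeling B C).labelGraph i) := by
  rintro ⟨φ⟩
  have hφ {a b : X} (hab : H.Adj a b) :
      (φ a).1 = (φ b).1 ∧ (C.labelGraph i).Adj (φ a).2 (φ b).2 := by
    have h := labelGraph_lexLabeling_adj.1 (φ.toHom.map_adj hab)
    rwa [hB, bot_adj, false_or] at h
  have fst_eq (a b : X) : (φ a).1 = (φ b).1 := by
    obtain ⟨p⟩ := hH a b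
    induction p with
    | nil => rfl
    | cons hab _ ih => exact (hφ hab).1.trans ih
  exact hC ⟨⟨fun a ↦ (φ a).2, fun hab ↦ (hφ hab).2⟩,
    fun a b hab ↦ φ.injective (Prod.ext (fst_eq a b) hab)⟩

end lexLabeling

/-- The labelling of a complete graph that gives every edge the label `p`. -/
def constLabeling (V : Type*) {α : Type*} (p : α) : TopEdgeLabeling V α :=
  fun _ ↦ p

theorem isGallai_constLabeling (p : α) : IsGallai (constLabeling V p) :=
  fun _ _ _ _ _ _ ↦ Or.inl rfl

/-- The labelling of a complete graph that gives the edges of `G` the label `p` and all other edges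
the label `q`. -/
def graphLabeling (G : SimpleGraph V) [DecidableRel G.Adj] (p q : α) : TopEdgeLabeling V α :=
  G.toTopEdgeLabeling.compRight ![q, p]

section graphLabeling

variable (G : SimpleGraph V) [DecidableRel G.Adj] {p q : α}

theorem graphLabeling_get {x y : V} (h : x ≠ y) :
    (graphLabeling G p q).get x y h = if G.Adj x y then p else q := by
  rw [graphLabeling, EdgeLabeling.compRight_get, toTopEdgeLabeling_get]
  split_ifs <;> rfl

theorem graphLabeling_apply_mem (e : (⊤ : SimpleGraph V).edgeSet) :
    graphLabeling G p q e ∈ ({p, q} : Set α) := by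
  rw [graphLabeling, EdgeLabeling.compRight_apply]
  generalize G.toTopEdgeLabeling e = j
  fin_cases j <;> simp

theorem isGallai_graphLabeling : IsGallai (graphLabeling G p q) := by
  intro x y z hxy hxz hyz
  simp only [graphLabeling_get]
  split_ifs <;> simp

theorem labelGraph_graphLabeling_left (hpq : p ≠ q) : (graphLabeling G p q).labelGraph p = G := by
  ext x y
  by_cases h : G.Adj x y <;> simp [graphLabeling_get, h, hpq.symm, G.ne_of_adj]

theorem labelGraph_graphLabeling_right (hpq : p ≠ q) :
    (graphLabeling G p q).labelGraph q = Gᶜ := by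
  ext x y
  by_cases h : G.Adj x y <;> simp [graphLabeling_get, h, hpq]

end graphLabeling

end Labelings

section PaleyGraph

/-- The Paley graph of a ring `K`, with `x` and `y` adjacent when `x - y` is a square. It is meant
for finite fields with `-1` a square; otherwise the relation is symmetrized. -/
def paleyGraph (K : Type*) [Ring K] : SimpleGraph K :=
  circulantGraph {a | IsSquare a}

theorem paleyGraph_adj {K : Type*} [CommRing K] (hK : IsSquare (-1 : K)) {x y : K} :
    (paleyGraph K).Adj x y ↔ x ≠ y ∧ IsSquare (x - y) := by
  have hsymm : IsSquare (y - x) → IsSquare (x - y) := fun h ↦ by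
    simpa only [neg_one_mul, neg_sub] using hK.mul h
  simpa [paleyGraph] using fun _ ↦ hsymm

variable {K : Type*} [Field K]

theorem isSquare_mul_iff_not_isSquare [Finite K] {t a : K} (ht : ¬ IsSquare t) (ha : a ≠ 0) :
    IsSquare (t * a) ↔ ¬ IsSquare a := by
  classical
  have := Fintype.ofFinite K
  have ht0 : t ≠ 0 := by rintro rfl; exact ht IsSquare.zero
  rw [← quadraticChar_neg_one_iff_not_isSquare] at ht ⊢
  rw [← quadraticChar_one_iff_isSquare (mul_ne_zero ht0 ha), map_mul, ht]
  omega

theorem nonempty_paleyGraph_iso_compl [Fintype K] (hK : Fintype.card K % 4 = 1) :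
    Nonempty (paleyGraph K ≃g (paleyGraph K)ᶜ) := by
  have hneg : IsSquare (-1 : K) := FiniteField.isSquare_neg_one_iff.2 (by omega)
  obtain ⟨t, ht⟩ : ∃ t : K, ¬ IsSquare t :=
    FiniteField.exists_nonsquare fun h2 ↦ by
      have := FiniteField.even_card_of_char_two h2
      omega
  have ht0 : t ≠ 0 := by rintro rfl; exact ht IsSquare.zero
  refine ⟨Equiv.mulLeft₀ t ht0, fun {x y} ↦ ?_⟩
  rcases eq_or_ne x y with rfl | hxy
  · simp
  · simp [paleyGraph_adj hneg, hxy, ht0, ← mul_sub,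
      isSquare_mul_iff_not_isSquare ht (sub_ne_zero.2 hxy)]

theorem cliqueFree_compl_paleyGraph [Fintype K] (hK : Fintype.card K % 4 = 1) {r : ℕ}
    (hr : (paleyGraph K).CliqueFree r) : (paleyGraph K)ᶜ.CliqueFree r :=
  hr.comap (nonempty_paleyGraph_iso_compl hK).some.isContained'

theorem cliqueFree_three_paleyGraph_zmod_five : (paleyGraph (ZMod 5)).CliqueFree 3 := by
  intro t ht
  obtain ⟨a, b, c, hab, hac, hbc, -⟩ := is3Clique_iff.1 ht
  have no_triangle : ∀ x y z : ZMod 5, x ≠ y → IsSquare (x - y) → x ≠ z → IsSquare (x - z) →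
      y ≠ z → ¬ IsSquare (y - z) := by decide
  have hneg : IsSquare (-1 : ZMod 5) := by decide
  rw [paleyGraph_adj hneg] at hab hac hbc
  exact no_triangle a b c hab.1 hab.2 hac.1 hac.2 hbc.1 hbc.2

theorem cliqueFree_four_paleyGraph_zmod_seventeen :
    (paleyGraph (ZMod 17)).CliqueFree 4 := by
  rw [cliqueFree_iff]
  refine ⟨fun κ ↦ ?_⟩
  have no_K4 : ∀ x y : ZMod 17, x ≠ y ∧ IsSquare (x - y) → ∀ z, x ≠ z ∧ IsSquare (x - z) →
      y ≠ z ∧ IsSquare (y - z) → ∀ w, x ≠ w ∧ IsSquare (x - w) → y ≠ w ∧ IsSquare (y - w) →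
      ¬ (z ≠ w ∧ IsSquare (z - w)) := by decide +kernel
  have hneg : IsSquare (-1 : ZMod 17) := by decide
  have hκ {i j : Fin 4} (hij : i ≠ j) : κ i ≠ κ j ∧ IsSquare (κ i - κ j) :=
    (paleyGraph_adj hneg).1 (κ.toHom.map_adj hij)
  exact no_K4 (κ 0) (κ 1) (hκ (by decide)) (κ 2) (hκ (by decide)) (hκ (by decide)) (κ 3)
    (hκ (by decide)) (hκ (by decide)) (hκ (by decide))

end PaleyGraph

section GallaiColorings

variable {V W α : Type*} {F : α → Σ m, SimpleGraph (Fin m)} {S T : Set α}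

/-- `C` is a Gallai colouring that uses only colours of `S` and has no monochromatic copy of the
forbidden graph `F i` in any colour `i ∈ S`. The index type of `F i` is bundled with the graph,
since different colours may forbid graphs of different orders. -/
structure IsAvoidingGallai (F : α → Σ m, SimpleGraph (Fin m)) (S : Set α)
    (C : TopEdgeLabeling V α) : Prop where
  isGallai : IsGallai C
  apply_mem : ∀ e, C e ∈ S
  free : ∀ i ∈ S, (F i).2.Free (C.labelGraph i)

/-- Some colouring of the complete graph on `n` vertices is an `IsAvoidingGallai F S` colouring. -/
def HasAvoidingGallai (F : α → Σ m, SimpleGraph (Fin m)) (S : Set α) (n : ℕ) : Prop :=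
  ∃ C : TopEdgeLabeling (Fin n) α, IsAvoidingGallai F S C

theorem IsAvoidingGallai.pullback {C : TopEdgeLabeling V α} (hC : IsAvoidingGallai F S C)
    (e : W ↪ V) : IsAvoidingGallai F S (C.pullback e) where
  isGallai := hC.isGallai.pullback e
  apply_mem _ := hC.apply_mem _
  free i hi h := hC.free i hi (h.trans (labelGraph_pullback_isContained C e i))

theorem IsAvoidingGallai.hasAvoidingGallai [Fintype V] {C : TopEdgeLabeling V α}
    (hC : IsAvoidingGallai F S C) : HasAvoidingGallai F S (Fintype.card V) :=
  ⟨_, hC.pullback (Fintype.equivFin V).symm.toEmbedding⟩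

theorem labelGraph_eq_bot {G : SimpleGraph V} {C : EdgeLabeling G α} {i : α} (hi : ∀ e, C e ≠ i) :
    C.labelGraph i = ⊥ := by
  ext x y
  simp [EdgeLabeling.labelGraph_adj, hi]

theorem apply_mem_lexLabeling [DecidableEq V] {B : TopEdgeLabeling V α} {C : TopEdgeLabeling W α}
    (hB : ∀ e, B e ∈ T) (hC : ∀ e, C e ∈ S) (e : (⊤ : SimpleGraph (V × W)).edgeSet) :
    lexLabeling B C e ∈ S ∪ T := by
  obtain ⟨e, he⟩ := e
  induction e using Sym2.ind with | _ x y
  change dite _ _ _ ∈ _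
  split_ifs with h
  · exact Or.inl (hC _)
  · exact Or.inr (hB _)

theorem IsAvoidingGallai.lexLabeling [DecidableEq V] {B : TopEdgeLabeling V α}
    {C : TopEdgeLabeling W α} (hC : IsAvoidingGallai F S C) (hB : IsGallai B)
    (hBT : ∀ e, B e ∈ T) (hST : Disjoint S T) (hconn : ∀ i ∈ S, (F i).2.Preconnected)
    (hhom : ∀ i ∈ T, IsEmpty ((F i).2 →g B.labelGraph i)) :
    IsAvoidingGallai F (S ∪ T) (lexLabeling B C) where
  isGallai := hB.lexLabeling hC.isGallai
  apply_mem := apply_mem_lexLabeling hBT hC.apply_mem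
  free := by
    rintro i (hi | hi)
    · have hBi : B.labelGraph i = ⊥ := labelGraph_eq_bot fun e ↦ (hST.ne_of_mem hi (hBT e)).symm
      exact free_labelGraph_lexLabeling (hconn i hi) hBi (hC.free i hi)
    · have hCi : C.labelGraph i = ⊥ := labelGraph_eq_bot fun e ↦ hST.ne_of_mem (hC.apply_mem e) hi
      obtain ⟨π⟩ := nonempty_hom_labelGraph_lexLabeling (B := B) hCi
      rintro ⟨φ⟩
      exact (hhom i hi).elim (π.comp φ.toHom)

theorem isEmpty_hom_of_cliqueFree {H : SimpleGraph W} {G : SimpleGraph V} {r : ℕ}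
    (hH : completeGraph (Fin r) ⊑ H) (hG : G.CliqueFree r) : IsEmpty (H →g G) := by
  refine ⟨fun φ ↦ (not_cliqueFree_iff_top_isContained r).2 ?_ hG⟩
  obtain ⟨κ⟩ := hH
  exact ⟨φ.comp κ.toHom, Hom.injective_of_top_hom _⟩

theorem HasAvoidingGallai.mul_card {n r : ℕ} [Fintype V] {B : TopEdgeLabeling V α}
    (hn : HasAvoidingGallai F S n) (hconn : ∀ i ∈ S, (F i).2.Preconnected) (hB : IsGallai B)
    (hBT : ∀ e, B e ∈ T) (hST : Disjoint S T) (hclique : ∀ i ∈ T, completeGraph (Fin r) ⊑ (F i).2)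
    (hfree : ∀ i ∈ T, (B.labelGraph i).CliqueFree r) :
    HasAvoidingGallai F (S ∪ T) (n * Fintype.card V) := by
  classical
  obtain ⟨C, hC⟩ := hn
  have hlex := hC.lexLabeling hB hBT hST hconn fun i hi ↦
    isEmpty_hom_of_cliqueFree (hclique i hi) (hfree i hi)
  simpa [mul_comm] using hlex.hasAvoidingGallai

theorem HasAvoidingGallai.mul_of_monochromatic {n m : ℕ} {p : α} (hn : HasAvoidingGallai F S n)
    (hconn : ∀ i ∈ S, (F i).2.Preconnected) (hpS : p ∉ S)
    (hp : completeGraph (Fin (m + 1)) ⊑ (F p).2) : HasAvoidingGallai F (insert p S) (n * m) := by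
  have h := hn.mul_card (T := {p}) (B := constLabeling (Fin m) p) hconn (isGallai_constLabeling p)
    (fun _ ↦ rfl) (Set.disjoint_singleton_right.2 hpS) (by simpa using hp)
    fun _ _ ↦ cliqueFree_of_card_lt (by simp)
  simpa using h

theorem HasAvoidingGallai.mul_card_of_paleyGraph {n r : ℕ} {p q : α} {K : Type*} [Field K]
    [Fintype K] (hn : HasAvoidingGallai F S n) (hconn : ∀ i ∈ S, (F i).2.Preconnected)
    (hK : Fintype.card K % 4 = 1) (hr : (paleyGraph K).CliqueFree r)
    (hpq : p ≠ q) (hpS : p ∉ S) (hqS : q ∉ S) (hp : completeGraph (Fin r) ⊑ (F p).2)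
    (hq : completeGraph (Fin r) ⊑ (F q).2) :
    HasAvoidingGallai F (S ∪ {p, q}) (n * Fintype.card K) := by
  classical
  refine hn.mul_card (B := graphLabeling (paleyGraph K) p q) hconn (isGallai_graphLabeling _)
    (graphLabeling_apply_mem _) (by simp [hpS, hqS]) (by rintro i (rfl | rfl) <;> assumption) ?_
  rintro i (rfl | rfl)
  · rwa [labelGraph_graphLabeling_left _ hpq]
  · rw [labelGraph_graphLabeling_right _ hpq]
    exact cliqueFree_compl_paleyGraph hK hr

theorem hasAvoidingGallai_empty_one : HasAvoidingGallai F ∅ 1 :=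
  ⟨EdgeLabeling.mk (fun x y hxy ↦ (hxy (Subsingleton.elim x y)).elim) (by simp),
    fun x y _ hxy ↦ (hxy (Subsingleton.elim x y)).elim, by simp, by simp⟩

theorem hasAvoidingGallai_singleton {n : ℕ} {p : α} (hn : n < (F p).1) :
    HasAvoidingGallai F {p} n := by
  refine ⟨constLabeling _ p, isGallai_constLabeling p, fun _ ↦ rfl, ?_⟩
  rintro i rfl ⟨φ⟩
  exact hn.not_ge (by simpa using Fintype.card_le_of_injective φ φ.injective)

theorem HasAvoidingGallai.mul_card_pow_of_paleyGraph {F : ℕ → Σ m, SimpleGraph (Fin m)}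
    {n m r t : ℕ} {K : Type*} [Field K] [Fintype K] (hn : HasAvoidingGallai F (Set.Icc 1 m) n)
    (hconn : ∀ i, (F i).2.Preconnected) (hK : Fintype.card K % 4 = 1)
    (hr : (paleyGraph K).CliqueFree r)
    (hF : ∀ i, m < i → i ≤ m + 2 * t → completeGraph (Fin r) ⊑ (F i).2) :
    HasAvoidingGallai F (Set.Icc 1 (m + 2 * t)) (n * Fintype.card K ^ t) := by
  induction t with
  | zero => simpa using hn
  | succ t ih =>
    have hcolors : Set.Icc 1 (m + 2 * t) ∪ {m + 2 * t + 1, m + 2 * t + 2} =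
        Set.Icc 1 (m + 2 * (t + 1)) := by
      ext i
      simp only [Set.mem_union, Set.mem_Icc, Set.mem_insert_iff, Set.mem_singleton_iff]
      omega
    rw [← hcolors, pow_succ, ← mul_assoc]
    exact (ih fun i hi hit ↦ hF i hi (by omega)).mul_card_of_paleyGraph (fun i _ ↦ hconn i) hK hr
      (by omega) (by simp) (by simp) (hF _ (by omega) (by omega)) (hF _ (by omega) (by omega))

end GallaiColorings

section Construction

/-- The graph `K₄⁺` on `Fin 5`, with centre `0`, triangle `{1, 2, 3}` and pendant vertex `4`. -/
def K4plus : SimpleGraph (Fin 5) where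
  Adj i j := i ≠ j ∧ (i = 0 ∨ j = 0 ∨ i ≠ 4 ∧ j ≠ 4)
  symm := ⟨by grind⟩
  loopless := ⟨by grind⟩

theorem preconnected_K4plus : K4plus.Preconnected := by
  have huniv (i : Fin 5) : K4plus.Reachable 0 i := by
    rcases eq_or_ne 0 i with rfl | hi
    · rfl
    · exact Adj.reachable ⟨hi, Or.inl rfl⟩
  exact fun i j ↦ (huniv i).symm.trans (huniv j)

theorem completeGraph_four_isContained_K4plus : completeGraph (Fin 4) ⊑ K4plus :=
  ⟨⟨Fin.castSucc, fun {i j} hij ↦ ⟨(Fin.castSucc_injective 4).ne hij,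
    Or.inr (Or.inr ⟨(Fin.castSucc_lt_last i).ne, (Fin.castSucc_lt_last j).ne⟩)⟩⟩,
    Fin.castSucc_injective 4⟩

theorem K4plus_isContained {V : Type*} {G : SimpleGraph V} {x a b d e : V} (hxa : G.Adj x a)
    (hxb : G.Adj x b) (hxd : G.Adj x d) (hxe : G.Adj x e) (hab : G.Adj a b) (had : G.Adj a d)
    (hbd : G.Adj b d) (hae : a ≠ e) (hbe : b ≠ e) (hde : d ≠ e) : K4plus ⊑ G := by
  have hadj : ∀ i j : Fin 5, K4plus.Adj i j → G.Adj (![x, a, b, d, e] i) (![x, a, b, d, e] j) := by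
    simp [Fin.forall_fin_succ, K4plus, *, adj_comm]
  have hinj : Function.Injective ![x, a, b, d, e] := by
    simp [Function.Injective, Fin.forall_fin_succ, hxa.ne, hxa.ne', hxb.ne, hxb.ne', hxd.ne,
      hxd.ne', hxe.ne, hxe.ne', hab.ne, hab.ne', had.ne, had.ne', hbd.ne, hbd.ne', hae, hae.symm,
      hbe, hbe.symm, hde, hde.symm]
  exact ⟨⟨_, hadj _ _⟩, hinj⟩

/-- The graph forbidden in colour `i`: `K₄⁺` for the first `s` colours and `K₃` for the others. -/
def forbiddenGraph (s i : ℕ) : Σ m, SimpleGraph (Fin m) :=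
  if i ≤ s then ⟨5, K4plus⟩ else ⟨3, completeGraph (Fin 3)⟩

variable {s i n m t : ℕ}

theorem forbiddenGraph_of_le (h : i ≤ s) : forbiddenGraph s i = ⟨5, K4plus⟩ :=
  if_pos h

theorem forbiddenGraph_of_lt (h : s < i) : forbiddenGraph s i = ⟨3, completeGraph (Fin 3)⟩ :=
  if_neg h.not_ge

theorem preconnected_forbiddenGraph (s i : ℕ) : (forbiddenGraph s i).2.Preconnected := by
  rcases le_or_gt i s with h | h
  · rw [forbiddenGraph_of_le h]
    exact preconnected_K4plus
  · rw [forbiddenGraph_of_lt h]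
    exact preconnected_top

theorem completeGraph_four_isContained_forbiddenGraph (h : i ≤ s) :
    completeGraph (Fin 4) ⊑ (forbiddenGraph s i).2 := by
  rw [forbiddenGraph_of_le h]
  exact completeGraph_four_isContained_K4plus

theorem completeGraph_three_isContained_forbiddenGraph (h : s < i) :
    completeGraph (Fin 3) ⊑ (forbiddenGraph s i).2 := by
  rw [forbiddenGraph_of_lt h]
  exact .rfl

theorem HasAvoidingGallai.mul_seventeen_pow
    (hn : HasAvoidingGallai (forbiddenGraph s) (Set.Icc 1 m) n) (hm : m + 2 * t ≤ s) :
    HasAvoidingGallai (forbiddenGraph s) (Set.Icc 1 (m + 2 * t)) (n * 17 ^ t) := by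
  have : Fact (Nat.Prime 17) := ⟨by norm_num⟩
  simpa using hn.mul_card_pow_of_paleyGraph (K := ZMod 17) (preconnected_forbiddenGraph s)
    (by simp) cliqueFree_four_paleyGraph_zmod_seventeen
    fun i _ hi ↦ completeGraph_four_isContained_forbiddenGraph (hi.trans hm)

theorem HasAvoidingGallai.mul_five_pow
    (hn : HasAvoidingGallai (forbiddenGraph s) (Set.Icc 1 m) n) (hm : s ≤ m) :
    HasAvoidingGallai (forbiddenGraph s) (Set.Icc 1 (m + 2 * t)) (n * 5 ^ t) := by
  have : Fact (Nat.Prime 5) := ⟨by norm_num⟩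
  simpa using hn.mul_card_pow_of_paleyGraph (K := ZMod 5) (preconnected_forbiddenGraph s)
    (by simp) cliqueFree_three_paleyGraph_zmod_five
    fun i hi _ ↦ completeGraph_three_isContained_forbiddenGraph (hm.trans_lt hi)

theorem HasAvoidingGallai.mul_two
    (hn : HasAvoidingGallai (forbiddenGraph s) (Set.Icc 1 m) n) (hm : s ≤ m) :
    HasAvoidingGallai (forbiddenGraph s) (Set.Icc 1 (m + 1)) (n * 2) := by
  rw [← Set.insert_Icc_right_eq_Icc_add_one (by omega)]
  exact hn.mul_of_monochromatic (fun i _ ↦ preconnected_forbiddenGraph s i) (by simp)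
    (completeGraph_three_isContained_forbiddenGraph (by omega))

theorem hasAvoidingGallai_seventeen_pow (a : ℕ) :
    HasAvoidingGallai (forbiddenGraph (2 * a)) (Set.Icc 1 (2 * a)) (17 ^ a) := by
  have h : HasAvoidingGallai (forbiddenGraph (2 * a)) (Set.Icc 1 0) 1 := by
    simpa using hasAvoidingGallai_empty_one
  simpa using h.mul_seventeen_pow (t := a) (by omega)

theorem hasAvoidingGallai_four_mul_seventeen_pow (a : ℕ) :
    HasAvoidingGallai (forbiddenGraph (2 * a + 1)) (Set.Icc 1 (2 * a + 1)) (4 * 17 ^ a) := by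
  have h : HasAvoidingGallai (forbiddenGraph (2 * a + 1)) (Set.Icc 1 1) 4 := by
    rw [Set.Icc_self]
    refine hasAvoidingGallai_singleton ?_
    rw [forbiddenGraph_of_le (by omega)]
    norm_num
  have h' := h.mul_seventeen_pow (t := a) (by omega)
  rwa [add_comm 1 (2 * a)] at h'

theorem f_even_add_even (a t : ℕ) : f (2 * a + 2 * t) (2 * a) = 17 ^ a * 5 ^ t := by
  simp [f]

theorem f_even_add_odd (a t : ℕ) :
    f (2 * a + 2 * t + 1) (2 * a) = 17 ^ a * 5 ^ t * 2 := by
  have hsub : 2 * a + 2 * t + 1 - 2 * a = 2 * t + 1 := by omega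
  calc
    _ = 2 * 17 ^ a * 5 ^ t := by simp [f, hsub]
    _ = _ := by ring

theorem f_odd_self (a : ℕ) : f (2 * a + 1) (2 * a + 1) = 4 * 17 ^ a := by
  simp [f]

theorem f_odd_add_odd (a t : ℕ) :
    f (2 * a + 1 + 2 * t + 1) (2 * a + 1) = 4 * 17 ^ a * 5 ^ t * 2 := by
  have hsub : 2 * a + 1 + 2 * t + 1 - (2 * a + 1) = 2 * t + 1 := by omega
  have hne : 2 * a ≠ 2 * a + 1 + 2 * t := by omega
  calc
    _ = 8 * 17 ^ a * 5 ^ t := by simp [f, hsub, hne]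
    _ = _ := by ring

theorem f_odd_add_even (a t : ℕ) :
    f (2 * a + 1 + 2 * t + 1 + 1) (2 * a + 1) = 4 * 17 ^ a * 5 ^ t * 2 * 2 := by
  have hsub : 2 * a + 1 + 2 * t + 1 + 1 - (2 * a + 1) = 2 * (t + 1) := by omega
  have hne : 2 * a ≠ 2 * a + 1 + 2 * t + 1 := by omega
  have hhalf : (2 * (t + 1) - 2) / 2 = t := by omega
  have hodd : ¬ Odd (2 * (t + 1)) := by simp
  calc
    _ = 16 * 17 ^ a * 5 ^ t := by simp [f, hsub, hne, hhalf, hodd]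
    _ = _ := by ring

theorem hasAvoidingGallai_f {k s : ℕ} (hs : s ≤ k) :
    HasAvoidingGallai (forbiddenGraph s) (Set.Icc 1 k) (f k s) := by
  obtain ⟨j, rfl⟩ := Nat.exists_eq_add_of_le hs
  obtain ⟨a, rfl | rfl⟩ := Nat.even_or_odd' s
  · have h := hasAvoidingGallai_seventeen_pow a
    obtain ⟨t, rfl | rfl⟩ := Nat.even_or_odd' j
    · rw [f_even_add_even]
      exact h.mul_five_pow le_rfl
    · rw [← add_assoc, f_even_add_odd]
      exact (h.mul_five_pow le_rfl).mul_two (by omega)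
  · have h := hasAvoidingGallai_four_mul_seventeen_pow a
    obtain ⟨t, rfl | rfl⟩ := Nat.even_or_odd' j
    · obtain _ | t := t
      · rwa [mul_zero, add_zero, f_odd_self]
      · rw [mul_add_one, ← add_assoc, ← add_assoc _ 1 1, f_odd_add_even]
        exact ((h.mul_five_pow le_rfl).mul_two (by omega)).mul_two (by omega)
    · rw [← add_assoc, f_odd_add_odd]
      exact (h.mul_five_pow le_rfl).mul_two (by omega)

end Construction

section ColoringFunction

variable {n : ℕ} {α : Type*} {i : α}

/-- The edge labelling `C` as a function of two vertices, with the junk value `d` on the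
diagonal. -/
def colorFun (C : TopEdgeLabeling (Fin n) α) (d : α) (u v : Fin n) : α :=
  if h : u = v then d else C.get u v h

variable {C : TopEdgeLabeling (Fin n) α} {d₀ : α}

theorem colorFun_of_ne {u v : Fin n} (h : u ≠ v) : colorFun C d₀ u v = C.get u v h :=
  dif_neg h

theorem isSym_colorFun : IsSym (colorFun C d₀) := fun u v ↦ by
  simp only [colorFun, eq_comm (a := v), C.get_comm u]

theorem IsGallai.noRainbowTriangle (hC : IsGallai C) : NoRainbowTriangle (colorFun C d₀) :=
  fun u v w huv huw hvw ↦ by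
    simpa only [colorFun_of_ne huv, colorFun_of_ne huw, colorFun_of_ne hvw] using hC huv huw hvw

theorem labelGraph_adj_of_colorFun_eq {u v : Fin n} (h : u ≠ v) (hi : colorFun C d₀ u v = i) :
    (C.labelGraph i).Adj u v :=
  (TopEdgeLabeling.labelGraph_adj u v).2 ⟨h, (colorFun_of_ne h).symm.trans hi⟩

theorem completeGraph_three_isContained_of_hasMonoK3 (h : HasMonoK3 (colorFun C d₀) i) :
    completeGraph (Fin 3) ⊑ C.labelGraph i := by
  obtain ⟨x, y, z, hxy, hxz, hyz, cxy, cxz, cyz⟩ := h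
  refine (not_cliqueFree_iff_top_isContained 3).1 (IsNClique.not_cliqueFree (s := {x, y, z}) ?_)
  exact is3Clique_triple_iff.2 ⟨labelGraph_adj_of_colorFun_eq hxy cxy,
    labelGraph_adj_of_colorFun_eq hxz cxz, labelGraph_adj_of_colorFun_eq hyz cyz⟩

theorem K4plus_isContained_of_hasMonoK4plus (h : HasMonoK4plus (colorFun C d₀) i) :
    K4plus ⊑ C.labelGraph i := by
  obtain ⟨x, a, b, d, e, hxa, hxb, hxd, hxe, hab, had, hae, hbd, hbe, hde,
    cxa, cxb, cxd, cxe, cab, cad, cbd⟩ := h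
  exact K4plus_isContained
    (labelGraph_adj_of_colorFun_eq hxa cxa) (labelGraph_adj_of_colorFun_eq hxb cxb)
    (labelGraph_adj_of_colorFun_eq hxd cxd) (labelGraph_adj_of_colorFun_eq hxe cxe)
    (labelGraph_adj_of_colorFun_eq hab cab) (labelGraph_adj_of_colorFun_eq had cad)
    (labelGraph_adj_of_colorFun_eq hbd cbd) hae hbe hde

end ColoringFunction

theorem gallai_ramsey_lower_construction (k s : ℕ) (hk : 1 ≤ k) (hs : s ≤ k) :
    ∃ c : Fin (f k s) → Fin (f k s) → ℕ, IsSym c ∧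
      (∀ u v : Fin (f k s), u ≠ v → c u v ∈ Finset.Icc 1 k) ∧
      NoRainbowTriangle c ∧
      (∀ i ∈ Finset.Icc 1 s, ¬ HasMonoK4plus c i) ∧
      (∀ i ∈ Finset.Icc (s + 1) k, ¬ HasMonoK3 c i) := by
  obtain ⟨C, hC⟩ := hasAvoidingGallai_f hs
  refine ⟨colorFun C 0, isSym_colorFun, fun u v huv ↦ ?_, hC.isGallai.noRainbowTriangle,
    fun i hi hK4plus ↦ ?_, fun i hi hK3 ↦ ?_⟩
  · rw [colorFun_of_ne huv, Finset.mem_Icc]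
    exact hC.apply_mem _
  · rw [Finset.mem_Icc] at hi
    have hfree := hC.free i ⟨hi.1, hi.2.trans hs⟩
    rw [forbiddenGraph_of_le hi.2] at hfree
    exact hfree (K4plus_isContained_of_hasMonoK4plus hK4plus)
  · rw [Finset.mem_Icc] at hi
    have hfree := hC.free i ⟨by omega, hi.2⟩
    rw [forbiddenGraph_of_lt hi.1] at hfree
    exact hfree (completeGraph_three_isContained_of_hasMonoK3 hK3)
end

section
/- For every positive integer k, the Gallai-Ramsey number gr_k(K3 : K4^+) equals 17^{k/2} + 1 if k is even, and 4·17^{(k−1)/2} + 1 if k is odd. -/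
/-!
For the upper bound, let `p` colors avoid `K₄⁺` and `q` further colors avoid triangles, and induct
on the vertex set. A color whose graph is connected on more than four vertices and avoids `K₄⁺` also
avoids `K₄`. Take a Gallai partition. If one of its colors makes the vertex set a join, each side
contains smaller cliques of that color, and the two sides are bounded separately. Otherwise both
colors `r` and `b` connect the parts, so every part contains smaller cliques of `r` and of `b` than
the whole. If no part contains an edge of a `K₄⁺`-avoiding color among `r` and `b`, the parts are
bounded by induction and their number by `R(3, 3) - 1 = 5`, `R(4, 3) - 1 = 8` or
`R(4, 4) - 1 = 17`. If some part does contain an edge of such a color, its neighborhood in that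
color contains none, and already the part and its two neighborhoods are small enough.

For the lower bound, both the Paley graph of order 17 and its complement are `K₄`-free. Starting
from a single vertex or a monochromatic `K₄`, substitute the current coloring for the vertices of
this graph, using two new colors each time.
-/

/-- The sequence `1, a, b, a * b, b ^ 2, a * b ^ 2, …`, which for `a = 4`, `b = 17` gives the
orders of the extremal colorings. -/
def altPow (a b : ℕ) : ℕ → ℕ
  | 0 => 1
  | 1 => a
  | n + 2 => b * altPow a b n

section Bounds

variable {a b p q : ℕ}

theorem altPow_eq_ite (a b : ℕ) :
    ∀ k, altPow a b k = if Even k then b ^ (k / 2) else a * b ^ ((k - 1) / 2)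
  | 0 => by simp [altPow]
  | 1 => by simp [altPow]
  | k + 2 => by
    rw [altPow, altPow_eq_ite a b k]
    by_cases hk : Even k
    · have hk' : Even (k + 2) := hk.add even_two
      rw [if_pos hk, if_pos hk', Nat.add_div_right k two_pos, pow_succ']
    · have hk' : ¬Even (k + 2) := by rwa [Nat.even_add, iff_true_right even_two]
      have hdiv : (k + 2 - 1) / 2 = (k - 1) / 2 + 1 := by
        have := Nat.odd_iff.mp (Nat.not_even_iff_odd.mp hk)
        omega
      rw [if_neg hk, if_neg hk', hdiv, pow_succ']
      ring

theorem altPow_pos (ha : 0 < a) (hb : 0 < b) : ∀ n, 0 < altPow a b n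
  | 0 => one_pos
  | 1 => ha
  | n + 2 => Nat.mul_pos hb (altPow_pos ha hb n)

theorem mul_altPow_le_altPow_succ (hab : a * a ≤ b) : ∀ n, a * altPow a b n ≤ altPow a b (n + 1)
  | 0 => by simp [altPow]
  | 1 => by simpa [altPow] using hab
  | n + 2 => by
    calc a * altPow a b (n + 2) = b * (a * altPow a b n) := by rw [altPow]; ring
      _ ≤ b * altPow a b (n + 1) := Nat.mul_le_mul_left b (mul_altPow_le_altPow_succ hab n)

theorem altPow_mono (ha : 0 < a) (hab : a * a ≤ b) : Monotone (altPow a b) :=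
  monotone_nat_of_le_succ fun n ↦
    (Nat.le_mul_of_pos_left _ ha).trans (mul_altPow_le_altPow_succ hab n)

/-- The bound for the order of a Gallai coloring in which `p` colors contain no `K₄⁺` and `q`
further colors contain no triangle. -/
def gallaiBound (p q : ℕ) : ℕ := altPow 4 17 p * altPow 2 5 q

theorem gallaiBound_zero_right (p : ℕ) : gallaiBound p 0 = altPow 4 17 p :=
  Nat.mul_one _

theorem gallaiBound_add_two_left (p q : ℕ) : gallaiBound (p + 2) q = 17 * gallaiBound p q := by
  rw [gallaiBound, gallaiBound, altPow, Nat.mul_assoc]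

theorem gallaiBound_add_two_right (p q : ℕ) : gallaiBound p (q + 2) = 5 * gallaiBound p q := by
  rw [gallaiBound, gallaiBound, altPow, Nat.mul_left_comm]

theorem gallaiBound_pos (p q : ℕ) : 0 < gallaiBound p q :=
  Nat.mul_pos (altPow_pos (by norm_num) (by norm_num) p) (altPow_pos (by norm_num) (by norm_num) q)

theorem gallaiBound_mono {p' q' : ℕ} (hp : p ≤ p') (hq : q ≤ q') :
    gallaiBound p q ≤ gallaiBound p' q' :=
  Nat.mul_le_mul (altPow_mono (by norm_num) (by norm_num) hp)
    (altPow_mono (by norm_num) (by norm_num) hq)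

theorem four_mul_gallaiBound_le (p q : ℕ) : 4 * gallaiBound p q ≤ gallaiBound (p + 1) q := by
  rw [gallaiBound, gallaiBound, ← Nat.mul_assoc]
  exact Nat.mul_le_mul_right _ (mul_altPow_le_altPow_succ (by norm_num) p)

theorem two_mul_gallaiBound_le (p q : ℕ) : 2 * gallaiBound p q ≤ gallaiBound p (q + 1) := by
  rw [gallaiBound, gallaiBound, Nat.mul_left_comm]
  exact Nat.mul_le_mul_left _ (mul_altPow_le_altPow_succ (by norm_num) q)

theorem four_mul_gallaiBound_succ_left_le (p q : ℕ) :
    4 * gallaiBound (p + 1) q ≤ 17 * gallaiBound p q :=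
  gallaiBound_add_two_left p q ▸ four_mul_gallaiBound_le (p + 1) q

theorem two_mul_gallaiBound_succ_right_le (p q : ℕ) :
    2 * gallaiBound p (q + 1) ≤ 5 * gallaiBound p q :=
  gallaiBound_add_two_right p q ▸ two_mul_gallaiBound_le p (q + 1)

theorem gallaiBound_add_succ_right_le (p q : ℕ) :
    gallaiBound p q + gallaiBound p (q + 1) ≤ gallaiBound (p + 1) q := by
  linarith [four_mul_gallaiBound_le p q, two_mul_gallaiBound_succ_right_le p q]

end Bounds

section Ramsey

variable {α : Type*} {G H : SimpleGraph α} {S X Y : Set α} {m n : ℕ}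

theorem cliqueFreeOn_or_of_isCompleteBetween (hXY : G.IsCompleteBetween X Y) (hX : X ⊆ S)
    (hY : Y ⊆ S) (hG : G.CliqueFreeOn S (m + n)) : G.CliqueFreeOn X m ∨ G.CliqueFreeOn Y n := by
  classical
  by_contra! h
  simp only [SimpleGraph.CliqueFreeOn, not_forall, not_not] at h
  obtain ⟨⟨s, hsX, hs⟩, t, htY, ht⟩ := h
  have hst : Disjoint s t := Finset.disjoint_coe.mp (hXY.disjoint.mono hsX htY)
  refine hG (t := s ∪ t) ?_ ⟨?_, ?_⟩
  · rw [Finset.coe_union]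
    exact Set.union_subset (hsX.trans hX) (htY.trans hY)
  · intro x hx y hy hxy
    rcases Finset.mem_union.mp hx with hx | hx <;> rcases Finset.mem_union.mp hy with hy | hy
    · exact hs.isClique hx hy hxy
    · exact hXY (hsX hx) (htY hy)
    · exact (hXY (hsX hy) (htY hx)).symm
    · exact ht.isClique hx hy hxy
  · rw [Finset.card_union_of_disjoint hst, hs.card_eq, ht.card_eq]

theorem cliqueFreeOn_left_of_isCompleteBetween (hXY : G.IsCompleteBetween X Y) (hX : X ⊆ S)
    (hY : Y ⊆ S) (hne : Y.Nonempty) (hG : G.CliqueFreeOn S (n + 1)) : G.CliqueFreeOn X n := by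
  refine (cliqueFreeOn_or_of_isCompleteBetween hXY hX hY hG).resolve_right fun h ↦ ?_
  obtain ⟨y, hy⟩ := hne
  exact h (t := {y}) (by simpa using hy) (by simp)

/-- The Ramsey number `R(m, n)` is at most `N + 1`, restricted to vertex sets in `α`. The two
color classes are allowed to overlap. -/
def RamseyBound (α : Type*) (m n N : ℕ) : Prop :=
  ∀ (G H : SimpleGraph α) (S : Finset α), (G ⊔ H).IsClique S →
    G.CliqueFreeOn S m → H.CliqueFreeOn S n → S.card ≤ N

variable {A B N : ℕ}

theorem RamseyBound.symm (h : RamseyBound α m n N) : RamseyBound α n m N :=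
  fun G H S hS hG hH ↦ h H G S (sup_comm G H ▸ hS) hH hG

theorem ramseyBound_two_left (α : Type*) (n : ℕ) : RamseyBound α 2 (n + 1) n := by
  intro G H S hS hG hH
  by_contra! hcard
  obtain ⟨T, hTS, hT⟩ := Finset.exists_subset_card_eq hcard
  refine hH (Finset.coe_subset.mpr hTS) ⟨fun x hx y hy hxy ↦ ?_, hT⟩
  exact (hS (hTS hx) (hTS hy) hxy).resolve_left
    ((SimpleGraph.cliqueFreeOn_two G).mp hG (hTS hx) (hTS hy) hxy)

section Neighbors

variable [DecidableRel G.Adj] {S : Finset α} {v : α}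

theorem card_filter_adj_le_of_ramseyBound (h : RamseyBound α m n N)
    (hS : (G ⊔ H).IsClique S) (hG : G.CliqueFreeOn S (m + 1)) (hH : H.CliqueFreeOn S n)
    (hv : v ∈ S) : (S.filter (G.Adj v)).card ≤ N := by
  have hsub : ((S.filter (G.Adj v) : Finset α) : Set α) ⊆ S :=
    Finset.coe_subset.mpr (Finset.filter_subset _ S)
  refine h G H _ (hS.subset hsub) ?_ (hH.subset _ hsub)
  rw [Finset.coe_filter]
  exact hG.of_succ _ hv

theorem card_le_card_filter_adj_add [DecidableRel H.Adj] (hS : (G ⊔ H).IsClique S) (hv : v ∈ S) :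
    S.card ≤ (S.filter (G.Adj v)).card + (S.filter (H.Adj v)).card + 1 := by
  classical
  have hcover : S ⊆ insert v (S.filter (G.Adj v) ∪ S.filter (H.Adj v)) := by
    intro x hx
    by_cases hxv : x = v
    · simp [hxv]
    · simpa [hx, hxv] using hS hv hx (Ne.symm hxv)
  calc S.card ≤ _ := Finset.card_le_card hcover
    _ ≤ _ := (Finset.card_insert_le _ _).trans (Nat.succ_le_succ (Finset.card_union_le _ _))

theorem even_card_mul_of_forall_card_filter_adj_eq {d : ℕ}
    (h : ∀ v ∈ S, (S.filter (G.Adj v)).card = d) : Even (S.card * d) := by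
  have hdeg (v : (S : Set α)) : (G.induce (S : Set α)).degree v = d := by
    rw [← h v v.2, ← SimpleGraph.card_neighborFinset_eq_degree,
      ← Finset.card_map (Function.Embedding.subtype (· ∈ (S : Set α)))]
    congr 1
    ext x
    simp [and_comm]
  have hsum := (G.induce (S : Set α)).sum_degrees_eq_twice_card_edges
  simp only [hdeg, Finset.sum_const, Finset.card_univ, smul_eq_mul, Finset.coe_sort_coe,
    Fintype.card_coe] at hsum
  exact hsum ▸ even_two_mul _

end Neighbors

theorem RamseyBound.step (hA : RamseyBound α m (n + 1) A) (hB : RamseyBound α (m + 1) n B) :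
    RamseyBound α (m + 1) (n + 1) (A + B + 1) := by
  classical
  intro G H S hS hG hH
  obtain rfl | ⟨v, hv⟩ := S.eq_empty_or_nonempty
  · simp
  have hGv := card_filter_adj_le_of_ramseyBound hA hS hG hH hv
  have hHv := card_filter_adj_le_of_ramseyBound hB.symm (sup_comm G H ▸ hS) hH hG hv
  linarith [card_le_card_filter_adj_add hS hv]

-- Otherwise some `A + B + 1` vertices would induce an `A`-regular graph, of odd order and degree.
theorem RamseyBound.step_of_odd (hA : RamseyBound α m (n + 1) A) (hB : RamseyBound α (m + 1) n B)
    (hAodd : Odd A) (hBodd : Odd B) : RamseyBound α (m + 1) (n + 1) (A + B) := by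
  classical
  intro G H S hS hG hH
  by_contra! hcard
  obtain ⟨T, hTS, hT⟩ := Finset.exists_subset_card_eq hcard
  replace hTS : (T : Set α) ⊆ S := Finset.coe_subset.mpr hTS
  replace hS := hS.subset hTS
  replace hG := hG.subset _ hTS
  replace hH := hH.subset _ hTS
  have hreg : ∀ v ∈ T, (T.filter (G.Adj v)).card = A := by
    intro v hv
    have hGv := card_filter_adj_le_of_ramseyBound hA hS hG hH hv
    have hHv := card_filter_adj_le_of_ramseyBound hB.symm (sup_comm G H ▸ hS) hH hG hv
    linarith [card_le_card_filter_adj_add hS hv]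
  have heven := even_card_mul_of_forall_card_filter_adj_eq hreg
  have hodd : Odd (T.card * A) :=
    Odd.mul (by rw [hT]; exact (hAodd.add_odd hBodd).add_one) hAodd
  exact Nat.not_even_iff_odd.mpr hodd heven

theorem ramseyBound_three_three (α : Type*) : RamseyBound α 3 3 5 :=
  (ramseyBound_two_left α 2).step (ramseyBound_two_left α 2).symm

theorem ramseyBound_four_three (α : Type*) : RamseyBound α 4 3 8 :=
  (ramseyBound_three_three α).step_of_odd (ramseyBound_two_left α 3).symm (by decide) (by decide)

theorem ramseyBound_four_four (α : Type*) : RamseyBound α 4 4 17 :=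
  (ramseyBound_four_three α).symm.step (ramseyBound_four_three α)

end Ramsey

section Gallai

variable {α κ : Type*}

/-- A Gallai coloring of the complete graph on `α`, given as a symmetric function of two vertices
whose values on the diagonal carry no meaning. -/
structure IsGallaiColoring (c : α → α → κ) : Prop where
  symm : ∀ u v, c u v = c v u
  no_rainbow : ∀ u v w, u ≠ v → u ≠ w → v ≠ w →
    c u v = c u w ∨ c u v = c v w ∨ c u w = c v w

/-- A Gallai partition of `V`, encoded by a setoid whose classes meet `V` in at least two parts:
only the colors `r` and `b` occur between distinct parts, and only one color between any two. -/
structure IsGallaiPartition (c : α → α → κ) (V : Finset α) (r b : κ) (s : Setoid α) : Prop where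
  color_eq_or : ∀ u ∈ V, ∀ v ∈ V, ¬s u v → c u v = r ∨ c u v = b
  color_congr : ∀ u ∈ V, ∀ u' ∈ V, ∀ v ∈ V, s u u' → ¬s u v → c u v = c u' v
  nontrivial : ∃ u ∈ V, ∃ v ∈ V, ¬s u v

variable {c : α → α → κ} {V : Finset α} {r b : κ} {s : Setoid α}

namespace IsGallaiPartition

protected theorem symm (h : IsGallaiPartition c V r b s) : IsGallaiPartition c V b r s where
  color_eq_or u hu v hv huv := (h.color_eq_or u hu v hv huv).symm
  color_congr := h.color_congr
  nontrivial := h.nontrivial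

theorem exists_not_rel (h : IsGallaiPartition c V r b s) (u : α) : ∃ v ∈ V, ¬s u v := by
  obtain ⟨x, hx, y, hy, hxy⟩ := h.nontrivial
  by_cases hux : s u x
  · exact ⟨y, hy, fun huy ↦ hxy (s.trans (s.symm hux) huy)⟩
  · exact ⟨x, hx, hux⟩

end IsGallaiPartition

/-- The partition of the vertices into the components of the edges in `V` whose color is neither
`r` nor `b`. -/
def componentSetoid (c : α → α → κ) (V : Finset α) (r b : κ) : Setoid α :=
  Relation.EqvGen.setoid fun x y ↦ x ∈ V ∧ y ∈ V ∧ c x y ≠ r ∧ c x y ≠ b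

theorem color_eq_or_of_not_componentSetoid {u v : α} (hu : u ∈ V) (hv : v ∈ V)
    (huv : ¬componentSetoid c V r b u v) : c u v = r ∨ c u v = b := by
  by_contra! h
  exact huv (.rel u v ⟨hu, hv, h⟩)

theorem IsGallaiColoring.color_eq_of_componentSetoid (hc : IsGallaiColoring c) {u u' v : α}
    (hv : v ∈ V) (huu' : componentSetoid c V r b u u') (huv : ¬componentSetoid c V r b u v) :
    c u v = c u' v := by
  classical
  set s := componentSetoid c V r b
  have hker : s ≤ Setoid.ker fun x ↦ if s x v then none else some (c x v) := by
    refine Setoid.eqvGen_le fun x y hxy ↦ ?_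
    have hsxy : s x y := .rel x y hxy
    obtain ⟨hx, hy, hne⟩ := hxy
    have hiff : s x v ↔ s y v := ⟨s.trans (s.symm hsxy), s.trans hsxy⟩
    by_cases hxv : s x v
    · simp [Setoid.ker_def, hxv, hiff.mp hxv]
    · have hyv : ¬s y v := hiff.not.mp hxv
      suffices c x v = c y v by simpa [Setoid.ker_def, hxv, hyv]
      obtain rfl | hxy := eq_or_ne x y
      · rfl
      have := color_eq_or_of_not_componentSetoid hx hv hxv
      have := color_eq_or_of_not_componentSetoid hy hv hyv
      have := hc.no_rainbow x y v hxy (fun h ↦ hxv (h ▸ s.refl x)) (fun h ↦ hyv (h ▸ s.refl y))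
      grind
  have hu'v : ¬s u' v := fun h ↦ huv (s.trans huu' h)
  simpa [Setoid.ker_def, huv, hu'v] using hker huu'

theorem IsGallaiColoring.mem_of_componentSetoid (hc : IsGallaiColoring c) {X : Finset α}
    (hcut : ∀ x ∈ X, ∀ y ∈ V, y ∉ X → c x y = r ∨ c x y = b) {x y : α}
    (hxy : componentSetoid c V r b x y) (hx : x ∈ X) : y ∈ X := by
  have hker : componentSetoid c V r b ≤ Setoid.ker (· ∈ X) := by
    refine Setoid.eqvGen_le fun x y ⟨hx, hy, hne⟩ ↦ propext ⟨fun h ↦ ?_, fun h ↦ ?_⟩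
    · by_contra hyX
      exact (hcut x h y hy hyX).elim hne.1 hne.2
    · by_contra hxX
      exact (hc.symm y x ▸ hcut y h x hx hxX).elim hne.1 hne.2
  exact (hker hxy).mp hx

theorem IsGallaiColoring.isGallaiPartition_componentSetoid (hc : IsGallaiColoring c) {X : Finset α}
    (hne : X.Nonempty) (hssub : X ⊂ V)
    (hcut : ∀ x ∈ X, ∀ y ∈ V, y ∉ X → c x y = r ∨ c x y = b) :
    IsGallaiPartition c V r b (componentSetoid c V r b) where
  color_eq_or _ hu _ hv huv := color_eq_or_of_not_componentSetoid hu hv huv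
  color_congr _ _ _ _ _ hv huu' huv := hc.color_eq_of_componentSetoid hv huu' huv
  nontrivial := by
    obtain ⟨x, hx⟩ := hne
    obtain ⟨y, hy, hyX⟩ := Finset.exists_of_ssubset hssub
    exact ⟨x, hssub.subset hx, y, hy, fun hxy ↦ hyX (hc.mem_of_componentSetoid hcut hxy hx)⟩

namespace IsGallaiPartition

variable {v : α}

theorem exists_forall_color_eq_or_of_not_rel (hs : IsGallaiPartition c V r b s)
    (hc : IsGallaiColoring c) (hv : v ∉ V)
    (hodd : ∀ u ∈ V, ∃ w ∈ V, s u w ∧ c v w ≠ r ∧ c v w ≠ b) :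
    ∃ i, ∀ w ∈ V, ∀ y ∈ V, ¬s w y → c v w = i ∨ c v w = c w y := by
  have htriangle (w) (hw : w ∈ V) (z) (hz : z ∈ V) (hwz : ¬s w z) :
      c v w = c v z ∨ c v w = c w z ∨ c v z = c w z :=
    hc.no_rainbow v w z (fun h ↦ hv (h ▸ hw)) (fun h ↦ hv (h ▸ hz)) fun h ↦ hwz (h ▸ s.refl w)
  obtain ⟨u, hu, -⟩ := hs.nontrivial
  obtain ⟨z₀, hz₀, -, hz₀odd⟩ := hodd u hu
  have hodd_eq_of_not_rel (w) (hw : w ∈ V) (z) (hz : z ∈ V) (hwz : ¬s w z)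
      (hwodd : c v w ≠ r ∧ c v w ≠ b) (hzodd : c v z ≠ r ∧ c v z ≠ b) : c v w = c v z := by
    have := htriangle w hw z hz hwz
    have := hs.color_eq_or w hw z hz hwz
    grind
  have hodd_eq (z) (hz : z ∈ V) (hzodd : c v z ≠ r ∧ c v z ≠ b) : c v z = c v z₀ := by
    obtain ⟨y, hy, hzy⟩ := hs.exists_not_rel z
    obtain ⟨w, hw, hyw, hwodd⟩ := hodd y hy
    have hzw : ¬s z w := fun h ↦ hzy (s.trans h (s.symm hyw))
    by_cases hz₀z : s z₀ z
    · have hz₀w : ¬s z₀ w := fun h ↦ hzw (s.trans (s.symm hz₀z) h)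
      exact (hodd_eq_of_not_rel z hz w hw hzw hzodd hwodd).trans
        (hodd_eq_of_not_rel z₀ hz₀ w hw hz₀w hz₀odd hwodd).symm
    · exact (hodd_eq_of_not_rel z₀ hz₀ z hz hz₀z hz₀odd hzodd).symm
  refine ⟨c v z₀, fun w hw y hy hwy ↦ ?_⟩
  obtain ⟨z, hz, hyz, hzodd⟩ := hodd y hy
  have hwz : ¬s w z := fun h ↦ hwy (s.trans h (s.symm hyz))
  have := htriangle w hw z hz hwz
  have := hs.color_eq_or w hw z hz hwz
  have := hs.color_congr y hy z hz w hw hyz (fun h ↦ hwy (s.symm h))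
  grind [hodd_eq z hz hzodd, hc.symm]

theorem exists_forall_color_eq_or (hs : IsGallaiPartition c V r b s)
    (hc : IsGallaiColoring c) (hv : v ∉ V)
    (hodd : ∀ u ∈ V, ∃ w ∈ V, s u w ∧ c v w ≠ r ∧ c v w ≠ b) :
    ∃ i j, ∀ w ∈ V, c v w = i ∨ c v w = j := by
  obtain ⟨i, hi⟩ := hs.exists_forall_color_eq_or_of_not_rel hc hv hodd
  have hcross (w) (hw : w ∈ V) (hne : c v w ≠ i) (y) (hy : y ∈ V) (hwy : ¬s w y) :
      c v w = c w y := (hi w hw y hy hwy).resolve_left hne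
  by_cases hall : ∀ w ∈ V, c v w = i
  · exact ⟨i, i, fun w hw ↦ .inl (hall w hw)⟩
  push Not at hall
  obtain ⟨w₀, hw₀, hne₀⟩ := hall
  refine ⟨i, c v w₀, fun w hw ↦ or_iff_not_imp_left.mpr fun hne ↦ ?_⟩
  by_cases hww₀ : s w w₀
  · obtain ⟨y, hy, hwy⟩ := hs.exists_not_rel w
    have hw₀y : ¬s w₀ y := fun h ↦ hwy (s.trans hww₀ h)
    rw [hcross w hw hne y hy hwy, hcross w₀ hw₀ hne₀ y hy hw₀y]
    exact hs.color_congr w hw w₀ hw₀ y hy hww₀ hwy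
  · rw [hcross w hw hne w₀ hw₀ hww₀, hcross w₀ hw₀ hne₀ w hw fun h ↦ hww₀ (s.symm h)]
    exact hc.symm w w₀

theorem insert_of_rel [DecidableEq α]
    (hs : IsGallaiPartition c V r b s) (hc : IsGallaiColoring c) (hv : v ∉ V) {u : α} (hu : u ∈ V)
    (huv : ∀ w ∈ V, s u w → c v w = r ∨ c v w = b) :
    IsGallaiPartition c (insert v V) r b (componentSetoid c (insert v V) r b) := by
  classical
  refine hc.isGallaiPartition_componentSetoid (X := V.filter (s u)) ⟨u, ?_⟩ ?_ ?_
  · exact Finset.mem_filter.mpr ⟨hu, s.refl u⟩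
  · refine Finset.ssubset_iff_of_subset ?_ |>.mpr ⟨v, by simp, by simp [hv]⟩
    exact (Finset.filter_subset _ V).trans (Finset.subset_insert v V)
  · intro x hx y hy hyx
    obtain ⟨hxV, hux⟩ := Finset.mem_filter.mp hx
    obtain rfl | hyV := Finset.mem_insert.mp hy
    · exact hc.symm y x ▸ huv x hxV hux
    · refine hs.color_eq_or x hxV y hyV fun hxy ↦ ?_
      exact hyx (Finset.mem_filter.mpr ⟨hyV, s.trans hux hxy⟩)

end IsGallaiPartition

theorem IsGallaiColoring.isGallaiPartition_insert_of_forall_color_eq_or [DecidableEq α] {v : α}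
    (hc : IsGallaiColoring c) (hv : v ∉ V) (hne : V.Nonempty)
    (hvertex : ∀ w ∈ V, c v w = r ∨ c v w = b) :
    IsGallaiPartition c (insert v V) r b (componentSetoid c (insert v V) r b) := by
  refine hc.isGallaiPartition_componentSetoid (Finset.singleton_nonempty v) ?_ ?_
  · obtain ⟨w, hw⟩ := hne
    refine (Finset.ssubset_iff_of_subset (by simp)).mpr ⟨w, Finset.mem_insert_of_mem hw, ?_⟩
    exact Finset.notMem_singleton.mpr (ne_of_mem_of_not_mem hw hv)
  · simp +contextual [hvertex]

-- Insert one more vertex `v`: either some part of the smaller partition is joined to the rest by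
-- two colors only, or just two colors appear at `v`.
theorem IsGallaiColoring.exists_isGallaiPartition (hc : IsGallaiColoring c) (hV : V.Nontrivial) :
    ∃ r b s, IsGallaiPartition c V r b s := by
  classical
  induction V using Finset.induction_on with
  | empty => exact absurd hV Finset.not_nontrivial_empty
  | insert v W hv ih =>
    obtain ⟨x, hx, hxv⟩ := hV.exists_ne v
    have hxW : x ∈ W := (Finset.mem_insert.mp hx).resolve_left hxv
    by_cases hW : W.Nontrivial
    · obtain ⟨r, b, s, hs⟩ := ih hW
      by_cases hodd : ∀ u ∈ W, ∃ w ∈ W, s u w ∧ c v w ≠ r ∧ c v w ≠ b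
      · obtain ⟨i, j, hij⟩ := hs.exists_forall_color_eq_or hc hv hodd
        exact ⟨i, j, _, hc.isGallaiPartition_insert_of_forall_color_eq_or hv ⟨x, hxW⟩ hij⟩
      · push Not at hodd
        obtain ⟨u, hu, huv⟩ := hodd
        exact ⟨r, b, _, hs.insert_of_rel hc hv hu fun w hw huw ↦
          or_iff_not_imp_left.mpr (huv w hw huw)⟩
    · refine ⟨c v x, c v x, _, hc.isGallaiPartition_insert_of_forall_color_eq_or hv ⟨x, hxW⟩
        fun w hw ↦ .inl ?_⟩
      rw [Set.not_nontrivial_iff.mp hW hw hxW]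

end Gallai

section GallaiPartition

variable {α κ : Type*} {c : α → α → κ} {V : Finset α} {r b : κ} {s : Setoid α}

/-- The graph of the edges of color `i`. -/
def colorGraph (c : α → α → κ) (i : κ) : SimpleGraph α := .fromRel fun u v ↦ c u v = i

theorem colorGraph_adj (hc : ∀ u v, c u v = c v u) {i : κ} {u v : α} :
    (colorGraph c i).Adj u v ↔ u ≠ v ∧ c u v = i := by
  rw [colorGraph, SimpleGraph.fromRel_adj, hc v u, or_self_iff]

open Classical in
/-- The part of `V` that contains `u`: the vertices of `V` in the class of `u`. -/
noncomputable def partOf (V : Finset α) (s : Setoid α) (u : α) : Finset α := V.filter (s u)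

theorem mem_partOf {u v : α} : v ∈ partOf V s u ↔ v ∈ V ∧ s u v := by
  simp [partOf]

theorem partOf_subset (V : Finset α) (s : Setoid α) (u : α) : partOf V s u ⊆ V :=
  fun _ hx ↦ (mem_partOf.mp hx).1

theorem exists_transversal {M : ℕ} (hM : ∀ u ∈ V, (partOf V s u).card ≤ M) :
    ∃ S ⊆ V, (S : Set α).Pairwise (fun u v ↦ ¬s u v) ∧ V.card ≤ M * S.card := by
  classical
  obtain ⟨S, hSV, hinj, himage⟩ := Finset.exists_subset_injOn_image_eq_of_surjOn (V : Set α)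
    (V.image (Quotient.mk s)) (by rw [Finset.coe_image]; exact Set.surjOn_image _ _)
  refine ⟨S, Finset.coe_subset.mp hSV, fun x hx y hy hxy h ↦ ?_, ?_⟩
  · exact hxy (hinj hx hy (Quotient.sound h))
  · rw [← Finset.card_image_of_injOn hinj, himage]
    refine Finset.card_le_mul_card_image V M fun q hq ↦ ?_
    obtain ⟨u, hu, rfl⟩ := Finset.mem_image.mp hq
    refine (Finset.card_le_card fun x hx ↦ ?_).trans (hM u hu)
    obtain ⟨hxV, hxu⟩ := Finset.mem_filter.mp hx
    exact mem_partOf.mpr ⟨hxV, s.symm (Quotient.exact hxu)⟩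

theorem IsGallaiPartition.card_le_mul (h : IsGallaiPartition c V r b s) {m n M N : ℕ}
    (hN : RamseyBound α m n N) (hr : (colorGraph c r).CliqueFreeOn V m)
    (hb : (colorGraph c b).CliqueFreeOn V n) (hM : ∀ u ∈ V, (partOf V s u).card ≤ M) :
    V.card ≤ M * N := by
  obtain ⟨S, hSV, hS, hcard⟩ := exists_transversal hM
  have hSV' : (S : Set α) ⊆ V := Finset.coe_subset.mpr hSV
  refine hcard.trans (Nat.mul_le_mul_left M (hN _ _ S ?_ (hr.subset _ hSV') (hb.subset _ hSV')))
  intro x hx y hy hxy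
  exact (h.color_eq_or x (hSV hx) y (hSV hy) (hS hx hy hxy)).imp
    (fun hr ↦ ⟨hxy, .inl hr⟩) (fun hb ↦ ⟨hxy, .inl hb⟩)

/-- The subgraph of `G` induced on `V` is a join: some proper nonempty subset of `V` is completely
joined to its complement. -/
def IsJoin (G : SimpleGraph α) (V : Finset α) : Prop :=
  ∃ X ⊂ V, X.Nonempty ∧ ∀ x ∈ X, ∀ y ∈ V, y ∉ X → G.Adj x y

/-- The subgraph of `G` induced on `V` is connected, in the form that every proper nonempty
subset of `V` has an outgoing edge. -/
def ConnectedOn (G : SimpleGraph α) (V : Finset α) : Prop :=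
  ∀ A ⊂ V, A.Nonempty → ∃ a ∈ A, ∃ y ∈ V, y ∉ A ∧ G.Adj a y

theorem IsJoin.connectedOn {G : SimpleGraph α} (h : IsJoin G V) : ConnectedOn G V := by
  rintro A hAV ⟨a, ha⟩
  obtain ⟨y, hyV, hyA⟩ := Finset.exists_of_ssubset hAV
  obtain ⟨X, hXV, ⟨x, hx⟩, hjoin⟩ := h
  obtain ⟨z, hzV, hzX⟩ := Finset.exists_of_ssubset hXV
  have haV := hAV.subset ha
  have hxV := hXV.subset hx
  by_contra! hno_edge
  grind [SimpleGraph.adj_comm]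

namespace IsGallaiPartition

theorem subset_partOf_or_isJoin (h : IsGallaiPartition c V r b s) {W : Finset α} (hWV : W ⊆ V)
    (hr : (colorGraph c r).CliqueFreeOn W 2) :
    (∃ u ∈ V, W ⊆ partOf V s u) ∨ IsJoin (colorGraph c b) W := by
  classical
  obtain rfl | ⟨w, hw⟩ := W.eq_empty_or_nonempty
  · obtain ⟨u, hu, -⟩ := h.nontrivial
    exact .inl ⟨u, hu, Finset.empty_subset _⟩
  by_cases hWw : ∀ v ∈ W, s w v
  · exact .inl ⟨w, hWV hw, fun v hv ↦ mem_partOf.mpr ⟨hWV hv, hWw v hv⟩⟩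
  push Not at hWw
  obtain ⟨v, hv, hwv⟩ := hWw
  refine .inr ⟨partOf W s w, ?_, ⟨w, mem_partOf.mpr ⟨hw, s.refl w⟩⟩, fun x hx y hyW hy ↦ ?_⟩
  · exact (Finset.ssubset_iff_of_subset (partOf_subset W s w)).mpr
      ⟨v, hv, fun h ↦ hwv (mem_partOf.mp h).2⟩
  obtain ⟨hxW, hwx⟩ := mem_partOf.mp hx
  have hxy : ¬s x y := fun hxy ↦ hy (mem_partOf.mpr ⟨hyW, s.trans hwx hxy⟩)
  have hne : x ≠ y := fun e ↦ hxy (e ▸ s.refl x)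
  refine ⟨hne, .inl ((h.color_eq_or x (hWV hxW) y (hWV hyW) hxy).resolve_left fun hcr ↦ ?_)⟩
  exact (SimpleGraph.cliqueFreeOn_two _).mp hr hxW hyW hne ⟨hne, .inl hcr⟩

end IsGallaiPartition

/-- A Gallai partition none of whose two colors makes `V` a join, so that the graph of the parts
is connected in both colors. -/
structure IsPrimitivePartition (c : α → α → κ) (V : Finset α) (r b : κ) (s : Setoid α) : Prop
    extends IsGallaiPartition c V r b s where
  not_isJoin_left : ¬IsJoin (colorGraph c r) V
  not_isJoin_right : ¬IsJoin (colorGraph c b) V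

open Classical in
/-- The vertices of `V` joined to the part of `u` by edges of color `i`. -/
noncomputable def outNeighbors (c : α → α → κ) (V : Finset α) (s : Setoid α) (i : κ) (u : α) :
    Finset α :=
  V.filter fun v ↦ ¬s u v ∧ c u v = i

theorem mem_outNeighbors {i : κ} {u v : α} :
    v ∈ outNeighbors c V s i u ↔ v ∈ V ∧ ¬s u v ∧ c u v = i := by
  simp [outNeighbors]

theorem outNeighbors_subset (c : α → α → κ) (V : Finset α) (s : Setoid α) (i : κ) (u : α) :
    outNeighbors c V s i u ⊆ V :=
  fun _ hx ↦ (mem_outNeighbors.mp hx).1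

theorem outNeighbors_ssubset {i : κ} {u : α} (hu : u ∈ V) : outNeighbors c V s i u ⊂ V :=
  (Finset.ssubset_iff_of_subset (outNeighbors_subset c V s i u)).mpr
    ⟨u, hu, fun h ↦ (mem_outNeighbors.mp h).2.1 (s.refl u)⟩

namespace IsGallaiPartition

variable {u : α}

theorem partOf_ssubset (h : IsGallaiPartition c V r b s) (u : α) : partOf V s u ⊂ V := by
  obtain ⟨v, hv, huv⟩ := h.exists_not_rel u
  exact (Finset.ssubset_iff_of_subset (partOf_subset V s u)).mpr
    ⟨v, hv, fun h ↦ huv (mem_partOf.mp h).2⟩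

theorem isCompleteBetween (h : IsGallaiPartition c V r b s) (hu : u ∈ V) (i : κ) :
    (colorGraph c i).IsCompleteBetween (partOf V s u) (outNeighbors c V s i u) := by
  intro x hx y hy
  obtain ⟨hxV, hux⟩ := mem_partOf.mp hx
  obtain ⟨hyV, huy, hi⟩ := mem_outNeighbors.mp hy
  refine ⟨fun hxy ↦ huy (hxy ▸ hux), .inl ?_⟩
  exact (h.color_congr u hu x hxV y hyV hux huy).symm.trans hi

theorem cliqueFreeOn_outNeighbors (h : IsGallaiPartition c V r b s) (hu : u ∈ V) {n : ℕ}
    {i : κ} (hi : (colorGraph c i).CliqueFreeOn V (n + 1)) :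
    (colorGraph c i).CliqueFreeOn (outNeighbors c V s i u) n :=
  cliqueFreeOn_left_of_isCompleteBetween (h.isCompleteBetween hu i).symm
    (Finset.coe_subset.mpr (outNeighbors_subset c V s i u))
    (Finset.coe_subset.mpr (partOf_subset V s u)) ⟨u, mem_partOf.mpr ⟨hu, s.refl u⟩⟩ hi

theorem cliqueFreeOn_partOf_or_outNeighbors (h : IsGallaiPartition c V r b s) (hu : u ∈ V) {i : κ}
    {m n : ℕ} (hi : (colorGraph c i).CliqueFreeOn V (m + n)) :
    (colorGraph c i).CliqueFreeOn (partOf V s u) m ∨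
      (colorGraph c i).CliqueFreeOn (outNeighbors c V s i u) n :=
  cliqueFreeOn_or_of_isCompleteBetween (h.isCompleteBetween hu i)
    (Finset.coe_subset.mpr (partOf_subset V s u))
    (Finset.coe_subset.mpr (outNeighbors_subset c V s i u)) hi

theorem card_le_card_partOf_add (h : IsGallaiPartition c V r b s) (hu : u ∈ V) :
    V.card ≤ (partOf V s u).card + (outNeighbors c V s r u).card +
      (outNeighbors c V s b u).card := by
  classical
  have hcover : V ⊆ partOf V s u ∪ outNeighbors c V s r u ∪ outNeighbors c V s b u := by
    intro v hv
    have := h.color_eq_or u hu v hv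
    grind [mem_partOf, mem_outNeighbors]
  calc V.card ≤ _ := Finset.card_le_card hcover
    _ ≤ _ := (Finset.card_union_le _ _).trans (Nat.add_le_add_right (Finset.card_union_le _ _) _)

end IsGallaiPartition

namespace IsPrimitivePartition

variable {u : α}

protected theorem symm (h : IsPrimitivePartition c V r b s) : IsPrimitivePartition c V b r s where
  toIsGallaiPartition := h.toIsGallaiPartition.symm
  not_isJoin_left := h.not_isJoin_right
  not_isJoin_right := h.not_isJoin_left

theorem exists_color_ne_right (h : IsPrimitivePartition c V r b s) (hu : u ∈ V) :
    ∃ v ∈ V, ¬s u v ∧ c u v ≠ b := by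
  by_contra! hb
  refine h.not_isJoin_right ⟨partOf V s u, h.partOf_ssubset u, ⟨u, mem_partOf.mpr ⟨hu, s.refl u⟩⟩,
    fun x hx y hyV hy ↦ h.isCompleteBetween hu b hx (mem_outNeighbors.mpr ?_)⟩
  have huy : ¬s u y := fun huy ↦ hy (mem_partOf.mpr ⟨hyV, huy⟩)
  exact ⟨hyV, huy, hb y hyV huy⟩

theorem exists_color_eq_left (h : IsPrimitivePartition c V r b s) (hu : u ∈ V) :
    ∃ v ∈ V, ¬s u v ∧ c u v = r := by
  obtain ⟨v, hv, huv, hne⟩ := h.exists_color_ne_right hu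
  exact ⟨v, hv, huv, (h.color_eq_or u hu v hv huv).resolve_right hne⟩

theorem ne (h : IsPrimitivePartition c V r b s) : r ≠ b := by
  obtain ⟨u, hu, -⟩ := h.nontrivial
  obtain ⟨v, hv, huv, hne⟩ := h.exists_color_ne_right hu
  rintro rfl
  exact hne ((or_self_iff).mp (h.color_eq_or u hu v hv huv))

-- A set without outgoing edges of color `r` is a union of parts, hence joined to the rest of `V`
-- by edges of color `b`.
theorem connectedOn_left (h : IsPrimitivePartition c V r b s) : ConnectedOn (colorGraph c r) V := by
  classical
  intro A hAV hA
  by_contra! hclosed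
  have hno_edge (a) (ha : a ∈ A) (y) (hy : y ∈ V) (hyA : y ∉ A) : c a y ≠ r ∧ c y a ≠ r := by
    have := hclosed a ha y hy hyA
    rw [colorGraph, SimpleGraph.fromRel_adj] at this
    grind
  have hnot_rel (a) (ha : a ∈ A) (y) (hy : y ∈ V) (hyA : y ∉ A) : ¬s a y := by
    intro hay
    obtain ⟨z, hz, haz, hcolor⟩ := h.exists_color_eq_left (hAV.subset ha)
    have hcongr := h.color_congr a (hAV.subset ha) y hy z hz hay haz
    by_cases hzA : z ∈ A
    · exact (hno_edge z hzA y hy hyA).2 (hcongr.symm.trans hcolor)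
    · exact (hno_edge a ha z hz hzA).1 hcolor
  refine h.not_isJoin_right ⟨A, hAV, hA, fun a ha y hy hyA ↦ ⟨fun hay ↦ hyA (hay ▸ ha), .inl ?_⟩⟩
  exact (h.color_eq_or a (hAV.subset ha) y hy (hnot_rel a ha y hy hyA)).resolve_left
    (hno_edge a ha y hy hyA).1

theorem cliqueFreeOn_partOf (h : IsPrimitivePartition c V r b s) (hu : u ∈ V) {n : ℕ}
    (hr : (colorGraph c r).CliqueFreeOn V (n + 1)) :
    (colorGraph c r).CliqueFreeOn (partOf V s u) n := by
  obtain ⟨v, hv, huv, hcolor⟩ := h.exists_color_eq_left hu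
  exact cliqueFreeOn_left_of_isCompleteBetween (h.isCompleteBetween hu r)
    (Finset.coe_subset.mpr (partOf_subset V s u))
    (Finset.coe_subset.mpr (outNeighbors_subset c V s r u))
    ⟨v, mem_outNeighbors.mpr ⟨hv, huv, hcolor⟩⟩ hr

end IsPrimitivePartition

end GallaiPartition

section UpperBound

variable {α κ : Type*} {c : α → α → κ} {V W : Finset α} {r b i : κ} {s : Setoid α}

/-- The subgraph of `G` induced on `s` contains no `K₄⁺`: no vertex of `s` outside a 4-clique in
`s` is adjacent to a vertex of the clique. -/
def K4PlusFreeOn (G : SimpleGraph α) (s : Set α) : Prop :=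
  ∀ t : Finset α, ↑t ⊆ s → G.IsNClique 4 t → ∀ a ∈ t, ∀ y ∈ s, y ∉ t → ¬G.Adj a y

theorem K4PlusFreeOn.subset {G : SimpleGraph α} {s₁ s₂ : Set α} (hs : s₁ ⊆ s₂)
    (h : K4PlusFreeOn G s₂) : K4PlusFreeOn G s₁ :=
  fun t ht hclique a ha y hy ↦ h t (ht.trans hs) hclique a ha y (hs hy)

theorem K4PlusFreeOn.cliqueFreeOn_four {G : SimpleGraph α} (h : K4PlusFreeOn G V)
    (hconn : ConnectedOn G V) (hcard : 4 < V.card) : G.CliqueFreeOn V 4 := by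
  intro t htV ht
  have hss : t ⊂ V := (Finset.coe_subset.mp htV).ssubset_of_ne fun e ↦ by
    rw [← e, ht.card_eq] at hcard
    exact lt_irrefl 4 hcard
  obtain ⟨a, ha, y, hy, hyt, hadj⟩ := hconn t hss (Finset.card_pos.mp (by simp [ht.card_eq]))
  exact h t htV ht a ha y hy hyt hadj

/-- The coloring `c` of the edges in `V` uses only colors from `P` and `Q`, without a
monochromatic `K₄⁺` in the colors of `P` and without a monochromatic triangle in those of `Q`. -/
structure IsAdmissible (c : α → α → κ) (V : Finset α) (P Q : Finset κ) : Prop where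
  color_mem : ∀ u ∈ V, ∀ v ∈ V, u ≠ v → c u v ∈ P ∨ c u v ∈ Q
  k4PlusFreeOn : ∀ i ∈ P, K4PlusFreeOn (colorGraph c i) V
  cliqueFreeOn : ∀ i ∈ Q, (colorGraph c i).CliqueFreeOn V 3

theorem color_ne_of_cliqueFreeOn_two (h : (colorGraph c i).CliqueFreeOn V 2) {u v : α}
    (hu : u ∈ V) (hv : v ∈ V) (huv : u ≠ v) : c u v ≠ i :=
  fun hi ↦ (SimpleGraph.cliqueFreeOn_two _).mp h hu hv huv ⟨huv, .inl hi⟩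

namespace IsAdmissible

variable {P Q : Finset κ}

theorem subset (h : IsAdmissible c V P Q) (hWV : W ⊆ V) : IsAdmissible c W P Q where
  color_mem u hu v hv huv := h.color_mem u (hWV hu) v (hWV hv) huv
  k4PlusFreeOn i hi := (h.k4PlusFreeOn i hi).subset (Finset.coe_subset.mpr hWV)
  cliqueFreeOn i hi := (h.cliqueFreeOn i hi).subset _ (Finset.coe_subset.mpr hWV)

variable [DecidableEq κ]

theorem of_insert_left (h : IsAdmissible c V (insert i P) Q)
    (hi : (colorGraph c i).CliqueFreeOn V 2) : IsAdmissible c V P Q where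
  color_mem u hu v hv huv := (h.color_mem u hu v hv huv).imp_left fun hmem ↦
    (Finset.mem_insert.mp hmem).resolve_left (color_ne_of_cliqueFreeOn_two hi hu hv huv)
  k4PlusFreeOn j hj := h.k4PlusFreeOn j (Finset.mem_insert_of_mem hj)
  cliqueFreeOn := h.cliqueFreeOn

theorem of_insert_right (h : IsAdmissible c V P (insert i Q))
    (hi : (colorGraph c i).CliqueFreeOn V 2) : IsAdmissible c V P Q where
  color_mem u hu v hv huv := (h.color_mem u hu v hv huv).imp_right fun hmem ↦
    (Finset.mem_insert.mp hmem).resolve_left (color_ne_of_cliqueFreeOn_two hi hu hv huv)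
  k4PlusFreeOn := h.k4PlusFreeOn
  cliqueFreeOn j hj := h.cliqueFreeOn j (Finset.mem_insert_of_mem hj)

theorem shift (h : IsAdmissible c V (insert i P) Q)
    (hi : (colorGraph c i).CliqueFreeOn V 3) : IsAdmissible c V P (insert i Q) where
  color_mem u hu v hv huv := by
    have := h.color_mem u hu v hv huv
    grind
  k4PlusFreeOn j hj := h.k4PlusFreeOn j (Finset.mem_insert_of_mem hj)
  cliqueFreeOn := Finset.forall_mem_insert _ _ _ |>.mpr ⟨hi, h.cliqueFreeOn⟩

end IsAdmissible

/-- `W` satisfies the upper bound to be proved; used as an induction hypothesis. -/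
def SatisfiesBound (c : α → α → κ) (W : Finset α) : Prop :=
  ∀ P Q, IsAdmissible c W P Q → W.card ≤ gallaiBound P.card Q.card

variable {P Q : Finset κ}

section InsertColors

variable [DecidableEq κ]

theorem SatisfiesBound.card_le_shift (hW : SatisfiesBound c W)
    (hadm : IsAdmissible c W (insert i P) Q) (hi : (colorGraph c i).CliqueFreeOn W 3) :
    W.card ≤ gallaiBound P.card (Q.card + 1) :=
  (hW _ _ (hadm.shift hi)).trans (gallaiBound_mono le_rfl (Finset.card_insert_le i Q))

theorem IsJoin.exists_isCompleteBetween {G : SimpleGraph α} (h : IsJoin G V) :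
    ∃ X ⊂ V, ∃ Y ⊂ V, X.Nonempty ∧ Y.Nonempty ∧ V.card = X.card + Y.card ∧
      G.IsCompleteBetween X Y := by
  classical
  obtain ⟨X, hXV, hX, hjoin⟩ := h
  refine ⟨X, hXV, V \ X, Finset.sdiff_ssubset hXV.subset hX, hX,
    Finset.sdiff_nonempty.mpr hXV.not_subset, ?_, fun x hx y hy ↦ ?_⟩
  · rw [← Finset.card_sdiff_add_card_eq_card hXV.subset, add_comm]
  · obtain ⟨hyV, hyX⟩ := Finset.mem_sdiff.mp hy
    exact hjoin x hx y hyV hyX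

theorem IsAdmissible.card_le_of_isJoin_left (hadm : IsAdmissible c V (insert i P) Q)
    (ih : ∀ W ⊂ V, SatisfiesBound c W) (hi : (colorGraph c i).CliqueFreeOn V 4)
    (hjoin : IsJoin (colorGraph c i) V) :
    V.card ≤ gallaiBound P.card Q.card + gallaiBound P.card (Q.card + 1) := by
  obtain ⟨X, hX, Y, hY, hXne, hYne, hcard, hXY⟩ := hjoin.exists_isCompleteBetween
  have hXV := Finset.coe_subset.mpr hX.subset
  have hYV := Finset.coe_subset.mpr hY.subset
  have hX_le := (ih X hX).card_le_shift (hadm.subset hX.subset)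
    (cliqueFreeOn_left_of_isCompleteBetween hXY hXV hYV hYne hi)
  have hY_le := (ih Y hY).card_le_shift (hadm.subset hY.subset)
    (cliqueFreeOn_left_of_isCompleteBetween hXY.symm hYV hXV hXne hi)
  rcases cliqueFreeOn_or_of_isCompleteBetween (m := 2) (n := 2) hXY hXV hYV hi with h | h
  · linarith [ih X hX _ _ ((hadm.subset hX.subset).of_insert_left h)]
  · linarith [ih Y hY _ _ ((hadm.subset hY.subset).of_insert_left h)]

theorem IsAdmissible.card_le_of_isJoin_right (hadm : IsAdmissible c V P (insert i Q))
    (ih : ∀ W ⊂ V, SatisfiesBound c W) (hjoin : IsJoin (colorGraph c i) V) :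
    V.card ≤ 2 * gallaiBound P.card Q.card := by
  obtain ⟨X, hX, Y, hY, hXne, hYne, hcard, hXY⟩ := hjoin.exists_isCompleteBetween
  have hXV := Finset.coe_subset.mpr hX.subset
  have hYV := Finset.coe_subset.mpr hY.subset
  have hi := hadm.cliqueFreeOn i (Finset.mem_insert_self i Q)
  have hX_le := ih X hX _ _ ((hadm.subset hX.subset).of_insert_right
    (cliqueFreeOn_left_of_isCompleteBetween hXY hXV hYV hYne hi))
  have hY_le := ih Y hY _ _ ((hadm.subset hY.subset).of_insert_right
    (cliqueFreeOn_left_of_isCompleteBetween hXY.symm hYV hXV hXne hi))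
  linarith

namespace IsPrimitivePartition

theorem card_le_of_cliqueFreeOn_two_left (h : IsPrimitivePartition c V r b s)
    (ih : ∀ W ⊂ V, SatisfiesBound c W) (hWV : W ⊂ V) (hadm : IsAdmissible c W (insert b P) Q)
    (hb : (colorGraph c b).CliqueFreeOn V 4) (hr : (colorGraph c r).CliqueFreeOn W 2) :
    W.card ≤ gallaiBound P.card Q.card + gallaiBound P.card (Q.card + 1) := by
  rcases h.subset_partOf_or_isJoin hWV.subset hr with ⟨u, hu, hWu⟩ | hjoin
  · exact ((ih W hWV).card_le_shift hadm ((h.symm.cliqueFreeOn_partOf hu hb).subset _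
      (Finset.coe_subset.mpr hWu))).trans (Nat.le_add_left _ _)
  · exact hadm.card_le_of_isJoin_left (fun X hX ↦ ih X (hX.trans hWV))
      (hb.subset _ (Finset.coe_subset.mpr hWV.subset)) hjoin

theorem card_le_of_cliqueFreeOn_two_right (h : IsPrimitivePartition c V r b s)
    (ih : ∀ W ⊂ V, SatisfiesBound c W) (hWV : W ⊂ V) (hadm : IsAdmissible c W P (insert b Q))
    (hb : (colorGraph c b).CliqueFreeOn V 3) (hr : (colorGraph c r).CliqueFreeOn W 2) :
    W.card ≤ 2 * gallaiBound P.card Q.card := by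
  rcases h.subset_partOf_or_isJoin hWV.subset hr with ⟨u, hu, hWu⟩ | hjoin
  · have := ih W hWV _ _ (hadm.of_insert_right ((h.symm.cliqueFreeOn_partOf hu hb).subset _
      (Finset.coe_subset.mpr hWu)))
    linarith
  · exact hadm.card_le_of_isJoin_right (fun X hX ↦ ih X (hX.trans hWV)) hjoin

variable {u : α}

theorem card_le_right_right (h : IsPrimitivePartition c V r b s)
    (ih : ∀ W ⊂ V, SatisfiesBound c W) (hadm : IsAdmissible c V P (insert r (insert b Q))) :
    V.card ≤ 5 * gallaiBound P.card Q.card := by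
  have hr := hadm.cliqueFreeOn r (by simp)
  have hb := hadm.cliqueFreeOn b (by simp)
  rw [Nat.mul_comm]
  refine h.card_le_mul (ramseyBound_three_three α) hr hb fun u hu ↦ ?_
  have hpart := h.partOf_ssubset u
  exact ih _ hpart _ _ (((hadm.subset hpart.subset).of_insert_right
    (h.cliqueFreeOn_partOf hu hr)).of_insert_right (h.symm.cliqueFreeOn_partOf hu hb))

theorem card_le_left_right_of_edge (h : IsPrimitivePartition c V r b s)
    (ih : ∀ W ⊂ V, SatisfiesBound c W) (hadm : IsAdmissible c V (insert r P) (insert b Q))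
    (hr : (colorGraph c r).CliqueFreeOn V 4) (hu : u ∈ V)
    (hru : ¬(colorGraph c r).CliqueFreeOn (partOf V s u) 2) :
    V.card ≤ gallaiBound P.card (Q.card + 1) + 2 * gallaiBound P.card Q.card +
      gallaiBound (insert r P).card Q.card := by
  have hb := hadm.cliqueFreeOn b (by simp)
  have hpart := h.partOf_ssubset u
  have hout (i : κ) : outNeighbors c V s i u ⊂ V := outNeighbors_ssubset hu
  have hpart_le := (ih _ hpart).card_le_shift
    (((hadm.subset hpart.subset).of_insert_right (h.symm.cliqueFreeOn_partOf hu hb)))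
    (h.cliqueFreeOn_partOf hu hr)
  have hr_out := (h.cliqueFreeOn_partOf_or_outNeighbors (m := 2) (n := 2) hu hr).resolve_left hru
  have hr_le := h.card_le_of_cliqueFreeOn_two_right ih (hout r)
    ((hadm.subset (hout r).subset).of_insert_left hr_out) hb hr_out
  have hb_le := ih _ (hout b) _ _ ((hadm.subset (hout b).subset).of_insert_right
    (h.cliqueFreeOn_outNeighbors hu hb))
  linarith [h.card_le_card_partOf_add hu]

theorem card_le_left_right (h : IsPrimitivePartition c V r b s)
    (ih : ∀ W ⊂ V, SatisfiesBound c W) (hadm : IsAdmissible c V (insert r P) (insert b Q))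
    (hr : (colorGraph c r).CliqueFreeOn V 4) :
    V.card ≤ gallaiBound (P.card + 1) (Q.card + 1) := by
  have hb := hadm.cliqueFreeOn b (by simp)
  by_cases hedge : ∀ u ∈ V, (colorGraph c r).CliqueFreeOn (partOf V s u) 2
  · have : V.card ≤ gallaiBound P.card Q.card * 8 := by
      refine h.card_le_mul (ramseyBound_four_three α) hr hb fun u hu ↦ ?_
      have hpart := h.partOf_ssubset u
      exact ih _ hpart _ _ (((hadm.subset hpart.subset).of_insert_left
        (hedge u hu)).of_insert_right (h.symm.cliqueFreeOn_partOf hu hb))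
    linarith [four_mul_gallaiBound_le P.card Q.card, two_mul_gallaiBound_le (P.card + 1) Q.card]
  · push Not at hedge
    obtain ⟨u, hu, hru⟩ := hedge
    linarith [h.card_le_left_right_of_edge ih hadm hr hu hru,
      four_mul_gallaiBound_le P.card (Q.card + 1), two_mul_gallaiBound_le (P.card + 1) Q.card,
      two_mul_gallaiBound_le P.card Q.card,
      gallaiBound_mono (Finset.card_insert_le r P) (le_refl Q.card)]

theorem card_le_left_left_of_edge_edge (h : IsPrimitivePartition c V r b s)
    (ih : ∀ W ⊂ V, SatisfiesBound c W) (hadm : IsAdmissible c V (insert r (insert b P)) Q)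
    (hr : (colorGraph c r).CliqueFreeOn V 4) (hb : (colorGraph c b).CliqueFreeOn V 4) (hu : u ∈ V)
    (hru : ¬(colorGraph c r).CliqueFreeOn (partOf V s u) 2)
    (hbu : ¬(colorGraph c b).CliqueFreeOn (partOf V s u) 2) :
    V.card ≤ gallaiBound P.card (Q.card + 2) +
      2 * (gallaiBound P.card Q.card + gallaiBound P.card (Q.card + 1)) := by
  have hpart := h.partOf_ssubset u
  have hout (i : κ) : outNeighbors c V s i u ⊂ V := outNeighbors_ssubset hu
  have hpart_le : (partOf V s u).card ≤ gallaiBound P.card (Q.card + 2) :=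
    ((ih _ hpart).card_le_shift ((hadm.subset hpart.subset).shift (h.cliqueFreeOn_partOf hu hr))
      (h.symm.cliqueFreeOn_partOf hu hb)).trans
      (gallaiBound_mono le_rfl (Nat.add_le_add_right (Finset.card_insert_le r Q) 1))
  have hr_out := (h.cliqueFreeOn_partOf_or_outNeighbors (m := 2) (n := 2) hu hr).resolve_left hru
  have hb_out := (h.cliqueFreeOn_partOf_or_outNeighbors (m := 2) (n := 2) hu hb).resolve_left hbu
  have hr_le := h.card_le_of_cliqueFreeOn_two_left ih (hout r)
    ((hadm.subset (hout r).subset).of_insert_left hr_out) hb hr_out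
  rw [Finset.insert_comm] at hadm
  have hb_le := h.symm.card_le_of_cliqueFreeOn_two_left ih (hout b)
    ((hadm.subset (hout b).subset).of_insert_left hb_out) hr hb_out
  linarith [h.card_le_card_partOf_add hu]

theorem card_le_left_left_of_edge_no_edge (h : IsPrimitivePartition c V r b s)
    (ih : ∀ W ⊂ V, SatisfiesBound c W) (hadm : IsAdmissible c V (insert r (insert b P)) Q)
    (hr : (colorGraph c r).CliqueFreeOn V 4) (hb : (colorGraph c b).CliqueFreeOn V 4) (hu : u ∈ V)
    (hru : ¬(colorGraph c r).CliqueFreeOn (partOf V s u) 2)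
    (hbu : (colorGraph c b).CliqueFreeOn (partOf V s u) 2) :
    V.card ≤ gallaiBound P.card Q.card + 2 * gallaiBound P.card (Q.card + 1) +
      gallaiBound (P.card + 1) (Q.card + 1) := by
  have hpart := h.partOf_ssubset u
  have hout (i : κ) : outNeighbors c V s i u ⊂ V := outNeighbors_ssubset hu
  have hr_out := (h.cliqueFreeOn_partOf_or_outNeighbors (m := 2) (n := 2) hu hr).resolve_left hru
  have hr_le := h.card_le_of_cliqueFreeOn_two_left ih (hout r)
    ((hadm.subset (hout r).subset).of_insert_left hr_out) hb hr_out
  rw [Finset.insert_comm] at hadm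
  have hb_le := ((ih _ (hout b)).card_le_shift (hadm.subset (hout b).subset)
    (h.cliqueFreeOn_outNeighbors hu hb)).trans
    (gallaiBound_mono (Finset.card_insert_le r P) le_rfl)
  have hpart_le := (ih _ hpart).card_le_shift ((hadm.subset hpart.subset).of_insert_left hbu)
    (h.cliqueFreeOn_partOf hu hr)
  linarith [h.card_le_card_partOf_add hu]

theorem card_le_left_left_of_edge (h : IsPrimitivePartition c V r b s)
    (ih : ∀ W ⊂ V, SatisfiesBound c W) (hadm : IsAdmissible c V (insert r (insert b P)) Q)
    (hr : (colorGraph c r).CliqueFreeOn V 4) (hb : (colorGraph c b).CliqueFreeOn V 4) (hu : u ∈ V)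
    (hru : ¬(colorGraph c r).CliqueFreeOn (partOf V s u) 2) :
    V.card ≤ 17 * gallaiBound P.card Q.card := by
  by_cases hbu : (colorGraph c b).CliqueFreeOn (partOf V s u) 2
  · linarith [h.card_le_left_left_of_edge_no_edge ih hadm hr hb hu hru hbu,
      four_mul_gallaiBound_succ_left_le P.card (Q.card + 1),
      two_mul_gallaiBound_succ_right_le P.card Q.card]
  · linarith [h.card_le_left_left_of_edge_edge ih hadm hr hb hu hru hbu,
      gallaiBound_add_two_right P.card Q.card, two_mul_gallaiBound_succ_right_le P.card Q.card]

theorem card_le_left_left (h : IsPrimitivePartition c V r b s)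
    (ih : ∀ W ⊂ V, SatisfiesBound c W) (hadm : IsAdmissible c V (insert r (insert b P)) Q)
    (hr : (colorGraph c r).CliqueFreeOn V 4) (hb : (colorGraph c b).CliqueFreeOn V 4) :
    V.card ≤ 17 * gallaiBound P.card Q.card := by
  by_cases hedge : ∃ u ∈ V, ¬(colorGraph c r).CliqueFreeOn (partOf V s u) 2 ∨
      ¬(colorGraph c b).CliqueFreeOn (partOf V s u) 2
  · obtain ⟨u, hu, hru | hbu⟩ := hedge
    · exact h.card_le_left_left_of_edge ih hadm hr hb hu hru
    · exact h.symm.card_le_left_left_of_edge ih (Finset.insert_comm r b P ▸ hadm) hb hr hu hbu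
  · push Not at hedge
    rw [Nat.mul_comm]
    refine h.card_le_mul (ramseyBound_four_four α) hr hb fun u hu ↦ ?_
    have hpart := h.partOf_ssubset u
    exact ih _ hpart _ _ (((hadm.subset hpart.subset).of_insert_left
      (hedge u hu).1).of_insert_left (hedge u hu).2)

end IsPrimitivePartition

end InsertColors

theorem IsAdmissible.card_le_or_cliqueFreeOn_four (hadm : IsAdmissible c V P Q) (hi : i ∈ P)
    (hconn : ConnectedOn (colorGraph c i) V) :
    V.card ≤ gallaiBound P.card Q.card ∨ (colorGraph c i).CliqueFreeOn V 4 := by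
  classical
  refine (le_or_gt V.card 4).imp (fun hcard ↦ ?_) ((hadm.k4PlusFreeOn i hi).cliqueFreeOn_four hconn)
  rw [← Finset.card_erase_add_one hi]
  linarith [four_mul_gallaiBound_le (P.erase i).card Q.card,
    gallaiBound_pos (P.erase i).card Q.card]

theorem IsAdmissible.card_le_of_isJoin (hadm : IsAdmissible c V P Q)
    (ih : ∀ W ⊂ V, SatisfiesBound c W) (hjoin : IsJoin (colorGraph c i) V) :
    V.card ≤ gallaiBound P.card Q.card := by
  classical
  have hi : i ∈ P ∨ i ∈ Q := by
    obtain ⟨X, hXV, ⟨x, hx⟩, hXY⟩ := hjoin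
    obtain ⟨y, hy, hyX⟩ := Finset.exists_of_ssubset hXV
    obtain ⟨hxy, rfl | rfl⟩ := hXY x hx y hy hyX
    · exact hadm.color_mem x (hXV.subset hx) y hy hxy
    · exact hadm.color_mem y hy x (hXV.subset hx) hxy.symm
  rcases hi with hi | hi
  · rcases hadm.card_le_or_cliqueFreeOn_four hi hjoin.connectedOn with hcard | hfree
    · exact hcard
    rw [← Finset.insert_erase hi] at hadm
    rw [← Finset.card_erase_add_one hi]
    exact (hadm.card_le_of_isJoin_left ih hfree hjoin).trans (gallaiBound_add_succ_right_le _ _)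
  · rw [← Finset.insert_erase hi] at hadm
    rw [← Finset.card_erase_add_one hi]
    exact (hadm.card_le_of_isJoin_right ih hjoin).trans (two_mul_gallaiBound_le _ _)

namespace IsPrimitivePartition

theorem left_mem_or_mem (h : IsPrimitivePartition c V r b s) (hadm : IsAdmissible c V P Q) :
    r ∈ P ∨ r ∈ Q := by
  obtain ⟨u, hu, -⟩ := h.nontrivial
  obtain ⟨v, hv, huv, rfl⟩ := h.exists_color_eq_left hu
  exact hadm.color_mem u hu v hv fun e ↦ huv (e ▸ s.refl u)

theorem card_le_of_mem_left_of_mem_right (h : IsPrimitivePartition c V r b s)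
    (ih : ∀ W ⊂ V, SatisfiesBound c W) (hadm : IsAdmissible c V P Q) (hr : r ∈ P) (hb : b ∈ Q) :
    V.card ≤ gallaiBound P.card Q.card := by
  classical
  rcases hadm.card_le_or_cliqueFreeOn_four hr h.connectedOn_left with hcard | hfree
  · exact hcard
  rw [← Finset.insert_erase hr, ← Finset.insert_erase hb] at hadm
  rw [← Finset.card_erase_add_one hr, ← Finset.card_erase_add_one hb]
  exact h.card_le_left_right ih hadm hfree

theorem card_le_of_mem_left_of_mem_left (h : IsPrimitivePartition c V r b s)
    (ih : ∀ W ⊂ V, SatisfiesBound c W) (hadm : IsAdmissible c V P Q) (hr : r ∈ P) (hb : b ∈ P) :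
    V.card ≤ gallaiBound P.card Q.card := by
  classical
  rcases hadm.card_le_or_cliqueFreeOn_four hr h.connectedOn_left with hcard | hr_free
  · exact hcard
  rcases hadm.card_le_or_cliqueFreeOn_four hb h.symm.connectedOn_left with hcard | hb_free
  · exact hcard
  have hbP : b ∈ P.erase r := Finset.mem_erase.mpr ⟨h.ne.symm, hb⟩
  rw [← Finset.insert_erase hr, ← Finset.insert_erase hbP] at hadm
  rw [← Finset.card_erase_add_one hr, ← Finset.card_erase_add_one hbP, gallaiBound_add_two_left]
  exact h.card_le_left_left ih hadm hr_free hb_free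

theorem card_le_of_mem_right_of_mem_right (h : IsPrimitivePartition c V r b s)
    (ih : ∀ W ⊂ V, SatisfiesBound c W) (hadm : IsAdmissible c V P Q) (hr : r ∈ Q) (hb : b ∈ Q) :
    V.card ≤ gallaiBound P.card Q.card := by
  classical
  have hbQ : b ∈ Q.erase r := Finset.mem_erase.mpr ⟨h.ne.symm, hb⟩
  rw [← Finset.insert_erase hr, ← Finset.insert_erase hbQ] at hadm
  rw [← Finset.card_erase_add_one hr, ← Finset.card_erase_add_one hbQ, gallaiBound_add_two_right]
  exact h.card_le_right_right ih hadm

theorem card_le (h : IsPrimitivePartition c V r b s) (ih : ∀ W ⊂ V, SatisfiesBound c W)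
    (hadm : IsAdmissible c V P Q) : V.card ≤ gallaiBound P.card Q.card := by
  rcases h.left_mem_or_mem hadm with hr | hr <;> rcases h.symm.left_mem_or_mem hadm with hb | hb
  · exact h.card_le_of_mem_left_of_mem_left ih hadm hr hb
  · exact h.card_le_of_mem_left_of_mem_right ih hadm hr hb
  · exact h.symm.card_le_of_mem_left_of_mem_right ih hadm hb hr
  · exact h.card_le_of_mem_right_of_mem_right ih hadm hr hb

end IsPrimitivePartition

theorem IsGallaiColoring.satisfiesBound (hc : IsGallaiColoring c) (V : Finset α) :
    SatisfiesBound c V := by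
  induction V using Finset.strongInduction with
  | H V ih =>
    intro P Q hadm
    rcases le_or_gt V.card 1 with hV | hV
    · exact hV.trans (gallaiBound_pos _ _)
    obtain ⟨r, b, s, hs⟩ := hc.exists_isGallaiPartition (Finset.one_lt_card_iff_nontrivial.mp hV)
    by_cases hr : IsJoin (colorGraph c r) V
    · exact hadm.card_le_of_isJoin ih hr
    by_cases hb : IsJoin (colorGraph c b) V
    · exact hadm.card_le_of_isJoin ih hb
    exact IsPrimitivePartition.card_le ⟨hs, hr, hb⟩ ih hadm

end UpperBound

section Comap

variable {α β κ : Type*}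

theorem cliqueFree_of_hom {G : SimpleGraph α} {H : SimpleGraph β} {n : ℕ} (f : H →g G)
    (hG : G.CliqueFree n) : H.CliqueFree n := by
  contrapose! hG
  let e := (SimpleGraph.topEmbeddingOfNotCliqueFree hG).toHom
  exact SimpleGraph.IsContained.not_cliqueFree
    ⟨(f.comp e).toCopy (SimpleGraph.Hom.injective_of_top_hom (f.comp e))⟩

theorem k4PlusFreeOn_univ_of_cliqueFree {G : SimpleGraph α} (hG : G.CliqueFree 4) :
    K4PlusFreeOn G Set.univ :=
  fun t _ ht ↦ absurd ht (hG t)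

theorem K4PlusFreeOn.of_locallyInjective {G : SimpleGraph α} {H : SimpleGraph β}
    (hG : K4PlusFreeOn G Set.univ) (f : H →g G)
    (hinj : ∀ x y z, H.Adj x y → H.Adj x z → f y = f z → y = z) : K4PlusFreeOn H Set.univ := by
  classical
  intro t _ ht a ha y _ hyt hay
  have hft_inj : Set.InjOn f t := fun x hx z hz hxz ↦ by
    by_contra hne
    exact (f.map_adj (ht.isClique hx hz hne)).ne hxz
  refine hG (t.image f) (Set.subset_univ _) ⟨?_, ?_⟩ (f a) (Finset.mem_image_of_mem f ha) (f y)
    (Set.mem_univ _) (fun hfy ↦ ?_) (f.map_adj hay)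
  · rw [Finset.coe_image]
    rintro _ ⟨x, hx, rfl⟩ _ ⟨z, hz, rfl⟩ hne
    exact f.map_adj (ht.isClique hx hz fun h ↦ hne (h ▸ rfl))
  · rw [Finset.card_image_of_injOn hft_inj, ht.card_eq]
  · obtain ⟨z, hz, hzy⟩ := Finset.mem_image.mp hfy
    obtain rfl | hza := eq_or_ne z a
    · exact (f.map_adj hay).ne hzy
    · exact hyt (hinj a z y (ht.isClique ha hz hza.symm) hay hzy ▸ hz)

theorem IsGallaiColoring.comap {c : β → β → κ} (hc : IsGallaiColoring c) (f : α ↪ β) :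
    IsGallaiColoring fun u v ↦ c (f u) (f v) where
  symm u v := hc.symm (f u) (f v)
  no_rainbow u v w huv huw hvw := hc.no_rainbow (f u) (f v) (f w)
    (f.injective.ne huv) (f.injective.ne huw) (f.injective.ne hvw)

theorem colorGraph_comap (c : β → β → κ) (f : α ↪ β) (i : κ) :
    colorGraph (fun u v ↦ c (f u) (f v)) i = (colorGraph c i).comap f := by
  ext u v
  simp [colorGraph]

theorem IsAdmissible.comap [Fintype α] [Fintype β] {c : β → β → κ} {P Q : Finset κ}
    (h : IsAdmissible c Finset.univ P Q) (f : α ↪ β) :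
    IsAdmissible (fun u v ↦ c (f u) (f v)) Finset.univ P Q where
  color_mem u _ v _ huv :=
    h.color_mem _ (Finset.mem_univ _) _ (Finset.mem_univ _) (f.injective.ne huv)
  k4PlusFreeOn i hi := by
    have := h.k4PlusFreeOn i hi
    rw [Finset.coe_univ] at this ⊢
    rw [colorGraph_comap]
    exact this.of_locallyInjective (SimpleGraph.Embedding.comap f _).toHom
      fun _ _ _ _ _ h ↦ f.injective h
  cliqueFreeOn i hi := by
    have := h.cliqueFreeOn i hi
    rw [Finset.coe_univ, SimpleGraph.cliqueFreeOn_univ] at this ⊢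
    rw [colorGraph_comap]
    exact cliqueFree_of_hom (SimpleGraph.Embedding.comap f _).toHom this

end Comap

section BlowUp

variable {ι β κ : Type*} [DecidableEq ι] {G : SimpleGraph ι} [DecidableRel G.Adj]
  {r b i : κ} {c : β → β → κ}

/-- The coloring obtained by replacing each vertex of the complete graph on `ι` by a copy of `c`,
where the edges of `G` get color `r` and the other edges between different copies color `b`. -/
def blowUp (G : SimpleGraph ι) [DecidableRel G.Adj] (r b : κ) (c : β → β → κ) (u v : ι × β) : κ :=
  if u.1 = v.1 then c u.2 v.2 else if G.Adj u.1 v.1 then r else b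

protected theorem IsGallaiColoring.blowUp (hc : IsGallaiColoring c) :
    IsGallaiColoring (blowUp G r b c) where
  symm u v := by simp only [blowUp, eq_comm, hc.symm u.2 v.2, G.adj_comm]
  no_rainbow u v w huv huw hvw := by
    have := hc.no_rainbow u.2 v.2 w.2
    rw [ne_eq, Prod.ext_iff] at huv huw hvw
    by_cases hcopy : u.1 = v.1 ∧ u.1 = w.1
    · grind [blowUp]
    · grind [blowUp, G.adj_comm]

theorem colorGraph_blowUp_adj_of_ne (hir : i ≠ r) (hib : i ≠ b) {u v : ι × β} :
    (colorGraph (blowUp G r b c) i).Adj u v ↔ u.1 = v.1 ∧ (colorGraph c i).Adj u.2 v.2 := by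
  simp only [colorGraph, SimpleGraph.fromRel_adj, blowUp, ne_eq, Prod.ext_iff]
  grind

theorem adj_of_colorGraph_blowUp_adj_left (hrb : r ≠ b) (hr : ∀ x y, x ≠ y → c x y ≠ r)
    {u v : ι × β} (h : (colorGraph (blowUp G r b c) r).Adj u v) : G.Adj u.1 v.1 := by
  simp only [colorGraph, SimpleGraph.fromRel_adj, blowUp, ne_eq, Prod.ext_iff] at h
  grind [G.adj_comm]

theorem blowUp_compl : blowUp Gᶜ b r c = blowUp G r b c := by
  funext u v
  simp only [blowUp, SimpleGraph.compl_adj]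
  grind

theorem cliqueFree_colorGraph_blowUp_left (hrb : r ≠ b) (hr : ∀ x y, x ≠ y → c x y ≠ r) {n : ℕ}
    (hG : G.CliqueFree n) : (colorGraph (blowUp G r b c) r).CliqueFree n :=
  cliqueFree_of_hom ⟨Prod.fst, adj_of_colorGraph_blowUp_adj_left hrb hr⟩ hG

theorem cliqueFree_colorGraph_blowUp_right (hrb : r ≠ b) (hb : ∀ x y, x ≠ y → c x y ≠ b) {n : ℕ}
    (hG : Gᶜ.CliqueFree n) : (colorGraph (blowUp G r b c) b).CliqueFree n :=
  blowUp_compl (G := G) (c := c) ▸ cliqueFree_colorGraph_blowUp_left hrb.symm hb hG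

protected theorem IsAdmissible.blowUp [DecidableEq κ] [Fintype ι] [Fintype β] {P Q : Finset κ}
    (h : IsAdmissible c Finset.univ P Q) (hrb : r ≠ b) (hr : r ∉ P ∪ Q) (hb : b ∉ P ∪ Q)
    (hG : G.CliqueFree 4) (hGc : Gᶜ.CliqueFree 4) :
    IsAdmissible (blowUp G r b c) Finset.univ (insert r (insert b P)) Q := by
  have hcolor (x y) (hxy : x ≠ y) : c x y ∈ P ∪ Q :=
    Finset.mem_union.mpr (h.color_mem x (Finset.mem_univ x) y (Finset.mem_univ y) hxy)
  have hne {j} (hj : j ∉ P ∪ Q) (x y) (hxy : x ≠ y) : c x y ≠ j :=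
    fun e ↦ hj (e ▸ hcolor x y hxy)
  have hsnd {j} (hj : j ∈ P ∪ Q) {u v : ι × β} :=
    colorGraph_blowUp_adj_of_ne (G := G) (c := c) (u := u) (v := v)
      (ne_of_mem_of_not_mem hj hr) (ne_of_mem_of_not_mem hj hb)
  refine ⟨fun u _ v _ huv ↦ ?_, fun j hj ↦ ?_, fun j hj ↦ ?_⟩
  · have := hcolor u.2 v.2
    grind [blowUp, Prod.ext_iff]
  · rw [Finset.coe_univ]
    rcases Finset.mem_insert.mp hj with rfl | hj
    · exact k4PlusFreeOn_univ_of_cliqueFree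
        (cliqueFree_colorGraph_blowUp_left hrb (hne hr) hG)
    rcases Finset.mem_insert.mp hj with rfl | hj
    · exact k4PlusFreeOn_univ_of_cliqueFree
        (cliqueFree_colorGraph_blowUp_right hrb (hne hb) hGc)
    have hj' := Finset.mem_union_left Q hj
    have hc := h.k4PlusFreeOn j hj
    rw [Finset.coe_univ] at hc
    refine hc.of_locallyInjective ⟨Prod.snd, fun huv ↦ ((hsnd hj').mp huv).2⟩ ?_
    intro x y z hxy hxz hyz
    exact Prod.ext (((hsnd hj').mp hxy).1.symm.trans ((hsnd hj').mp hxz).1) hyz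
  · have hj' := Finset.mem_union_right P hj
    have hc := h.cliqueFreeOn j hj
    rw [Finset.coe_univ, SimpleGraph.cliqueFreeOn_univ] at hc ⊢
    exact cliqueFree_of_hom ⟨Prod.snd, fun huv ↦ ((hsnd hj').mp huv).2⟩ hc

end BlowUp

section Paley

/-- The Paley graph of order 17, whose edges are the pairs differing by a nonzero square; by
Euler's criterion these are the differences `z` with `z ^ 8 = 1`. -/
def paleyGraph17 : SimpleGraph (ZMod 17) where
  Adj x y := (x - y) ^ 8 = 1
  symm := ⟨fun x y h ↦ by rwa [← neg_sub, Even.neg_pow (by decide)]⟩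
  loopless := ⟨fun x ↦ by rw [sub_self]; decide⟩

instance : DecidableRel paleyGraph17.Adj := fun x y ↦ inferInstanceAs (Decidable ((x - y) ^ 8 = 1))

-- Rescaling makes the first two of the four points `0` and `1`.
theorem exists_sub_pow_eight_ne {e : ZMod 17} (he : e ≠ 0) (f : Fin 4 → ZMod 17) :
    ∃ i j, i ≠ j ∧ (f i - f j) ^ 8 ≠ e := by
  have hnormalized : ∀ x y : ZMod 17, x ^ 8 = 1 → (x - 1) ^ 8 = 1 → y ^ 8 = 1 → (y - 1) ^ 8 = 1 →
      (x - y) ^ 8 ≠ 1 := by decide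
  have : Fact (Nat.Prime 17) := ⟨by norm_num⟩
  by_contra! hf
  have hd : f 1 - f 0 ≠ 0 := fun h ↦ he (by rw [← hf 1 0 (by decide), h]; rfl)
  have hratio (i j) (hij : i ≠ j) : ((f i - f j) / (f 1 - f 0)) ^ 8 = 1 := by
    rw [div_pow, hf i j hij, hf 1 0 (by decide), div_self he]
  have hsub_one (i) : (f i - f 0) / (f 1 - f 0) - 1 = (f i - f 1) / (f 1 - f 0) := by
    rw [← sub_sub_sub_cancel_right (f i) (f 1) (f 0), sub_div (f i - f 0), div_self hd]
  refine hnormalized ((f 2 - f 0) / (f 1 - f 0)) ((f 3 - f 0) / (f 1 - f 0))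
    (hratio 2 0 (by decide)) ?_ (hratio 3 0 (by decide)) ?_ ?_
  · rw [hsub_one, hratio 2 1 (by decide)]
  · rw [hsub_one, hratio 3 1 (by decide)]
  · rw [← sub_div, sub_sub_sub_cancel_right, hratio 2 3 (by decide)]

theorem cliqueFree_four_of_adj_imp_sub_pow_eight_eq {G : SimpleGraph (ZMod 17)} {e : ZMod 17}
    (he : e ≠ 0) (hG : ∀ x y, G.Adj x y → (x - y) ^ 8 = e) : G.CliqueFree 4 := by
  by_contra h
  let f := SimpleGraph.topEmbeddingOfNotCliqueFree h
  obtain ⟨i, j, hij, hne⟩ := exists_sub_pow_eight_ne he f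
  exact hne (hG _ _ (f.map_adj_iff.mpr hij))

theorem paleyGraph17_cliqueFree_four : paleyGraph17.CliqueFree 4 :=
  cliqueFree_four_of_adj_imp_sub_pow_eight_eq (by decide) fun _ _ h ↦ h

theorem paleyGraph17_compl_cliqueFree_four : paleyGraph17ᶜ.CliqueFree 4 := by
  have hpow : ∀ z : ZMod 17, z ≠ 0 → z ^ 8 ≠ 1 → z ^ 8 = -1 := by decide
  refine cliqueFree_four_of_adj_imp_sub_pow_eight_eq (e := -1) (by decide) fun x y h ↦ ?_
  rw [SimpleGraph.compl_adj] at h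
  exact hpow _ (sub_ne_zero.mpr h.1) h.2

end Paley

section LowerBound

theorem exists_isAdmissible_card_eq_altPow : ∀ k, ∃ (β : Type) (_ : Fintype β) (c : β → β → ℕ),
    IsGallaiColoring c ∧ IsAdmissible c Finset.univ (Finset.Icc 1 k) ∅ ∧
      Fintype.card β = altPow 4 17 k
  | 0 => by
    refine ⟨Unit, inferInstance, fun _ _ ↦ 0, ⟨by simp, by simp⟩, ⟨?_, by simp, by simp⟩, rfl⟩
    exact fun u _ v _ huv ↦ absurd (Subsingleton.elim u v) huv
  | 1 => by
    refine ⟨Fin 4, inferInstance, fun _ _ ↦ 1, ⟨by simp, by simp⟩, ⟨by simp, ?_, by simp⟩, rfl⟩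
    intro i _ t _ ht a _ y _ hyt
    rw [Finset.card_eq_iff_eq_univ t |>.mp ht.card_eq] at hyt
    exact absurd (Finset.mem_univ y) hyt
  | k + 2 => by
    obtain ⟨β, _, c, hc, hadm, hcard⟩ := exists_isAdmissible_card_eq_altPow k
    refine ⟨ZMod 17 × β, inferInstance, blowUp paleyGraph17 (k + 1) (k + 2) c, hc.blowUp, ?_, ?_⟩
    · have hIcc : Finset.Icc 1 (k + 2) = insert (k + 1) (insert (k + 2) (Finset.Icc 1 k)) := by
        grind
      rw [hIcc]
      exact hadm.blowUp (by simp) (by simp) (by simp) paleyGraph17_cliqueFree_four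
        paleyGraph17_compl_cliqueFree_four
    · rw [Fintype.card_prod, ZMod.card, hcard, altPow]

theorem exists_isAdmissible_fin {k n : ℕ} (hn : n ≤ altPow 4 17 k) : ∃ c : Fin n → Fin n → ℕ,
    IsGallaiColoring c ∧ IsAdmissible c Finset.univ (Finset.Icc 1 k) ∅ := by
  obtain ⟨β, _, c, hc, hadm, hcard⟩ := exists_isAdmissible_card_eq_altPow k
  obtain ⟨f⟩ : Nonempty (Fin n ↪ β) := Function.Embedding.nonempty_of_card_le (by simpa [hcard])
  exact ⟨_, hc.comap f, hadm.comap f⟩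

end LowerBound

theorem hasMonoK4plus_iff {n : ℕ} {κ : Type*} {c : Fin n → Fin n → κ} (hc : IsSym c) {i : κ} :
    HasMonoK4plus c i ↔ ¬K4PlusFreeOn (colorGraph c i) Set.univ := by
  simp only [K4PlusFreeOn, not_forall, not_not]
  constructor
  · rintro ⟨x, a, b, d, e, hxa, hxb, hxd, hxe, hab, had, hae, hbd, hbe, hde, hcolors⟩
    refine ⟨{x, a, b, d}, Set.subset_univ _, ?_, x, by simp, e, Set.mem_univ e, ?_, ?_⟩
    · have h3 : (colorGraph c i).IsNClique 3 {a, b, d} := by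
        simp_all [SimpleGraph.is3Clique_triple_iff, colorGraph_adj hc]
      refine h3.insert ?_
      simp_all [colorGraph_adj hc]
    · simp [hxe.symm, hae.symm, hbe.symm, hde.symm]
    · exact (colorGraph_adj hc).mpr ⟨hxe, hcolors.2.2.2.1⟩
  · rintro ⟨t, -, ht, x, hx, e, -, he, hxe⟩
    obtain ⟨a, b, d, hab, had, hbd, herase⟩ :=
      SimpleGraph.is3Clique_iff.mp (ht.erase_of_mem hx)
    have hmem (z) (hz : z ∈ ({a, b, d} : Finset (Fin n))) : z ≠ x ∧ z ∈ t :=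
      Finset.mem_erase.mp (herase ▸ hz)
    have hx_adj (z) (hz : z ∈ ({a, b, d} : Finset (Fin n))) : (colorGraph c i).Adj x z :=
      ht.isClique hx (hmem z hz).2 (hmem z hz).1.symm
    have hxa := hx_adj a (by simp)
    have hxb := hx_adj b (by simp)
    have hxd := hx_adj d (by simp)
    have hne (z) (hz : z ∈ ({a, b, d} : Finset (Fin n))) : z ≠ e :=
      ne_of_mem_of_not_mem (hmem z hz).2 he
    rw [colorGraph_adj hc] at hab had hbd hxa hxb hxd hxe
    exact ⟨x, a, b, d, e, hxa.1, hxb.1, hxd.1, hxe.1, hab.1, had.1, hne a (by simp), hbd.1,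
      hne b (by simp), hne d (by simp), hxa.2, hxb.2, hxd.2, hxe.2, hab.2, had.2, hbd.2⟩

theorem gallai_ramsey_K4plus (k : ℕ) (hk : 1 ≤ k) :
    IsLeast {n : ℕ |
        ∀ c : Fin n → Fin n → ℕ, IsSym c →
          (∀ u v : Fin n, u ≠ v → c u v ∈ Finset.Icc 1 k) →
          NoRainbowTriangle c →
          ∃ i ∈ Finset.Icc 1 k, HasMonoK4plus c i}
      (if Even k then 17 ^ (k / 2) + 1 else 4 * 17 ^ ((k - 1) / 2) + 1) := by
  rw [← apply_ite (· + 1), ← altPow_eq_ite]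
  constructor
  · intro c hsym hcolor hrainbow
    by_contra! hmono
    have hadm : IsAdmissible c Finset.univ (Finset.Icc 1 k) ∅ := by
      refine ⟨fun u _ v _ huv ↦ .inl (hcolor u v huv), fun i hi ↦ ?_, by simp⟩
      simpa [hasMonoK4plus_iff hsym] using hmono i hi
    have hcard := IsGallaiColoring.satisfiesBound ⟨hsym, hrainbow⟩ _ _ _ hadm
    simp [gallaiBound_zero_right] at hcard
  · intro n hn
    by_contra! hlt
    obtain ⟨c, hc, hadm⟩ := exists_isAdmissible_fin (Nat.lt_succ_iff.mp hlt)
    have hcolor (u v) (huv : u ≠ v) : c u v ∈ Finset.Icc 1 k :=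
      (hadm.color_mem u (Finset.mem_univ u) v (Finset.mem_univ v) huv).resolve_right (by simp)
    obtain ⟨i, hi, hmono⟩ := hn c hc.symm hcolor hc.no_rainbow
    exact (hasMonoK4plus_iff hc.symm).mp hmono (by simpa using hadm.k4PlusFreeOn i hi)
end
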